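/- arXiv:2110.06489 — 3 statements merged into one kernel-verified Lean document; each statement's English description precedes it below -/
import Mathlib

section
/- Let G = (V,E) be an infinite, connected, locally finite, simple graph with maximum degree at most 3 and nonnegative Ricci curvature (κ(u,v) ≥ 0 for every edge {u,v}). Then every positive harmonic function on G is constant. -/
open SimpleGraph

variable {V : Type*}

/-- Combinatorial (unnormalized) graph Laplacian. -/
def lapl (G : SimpleGraph V) [G.LocallyFinite] (f : V → ℝ) (x : V) : ℝ :=
  ∑ y ∈ G.neighborFinset x, (f y - f x)

/-- Lin-Lu-Yau-Ollivier Ricci curvature (limit-free definition):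
`κ(u,v) = inf { Δf(u) − Δf(v) : f 1-Lipschitz w.r.t. graph distance, f v − f u = 1 }`. -/
noncomputable def ricci (G : SimpleGraph V) [G.LocallyFinite] (u v : V) : ℝ :=
  sInf { r : ℝ | ∃ f : V → ℝ,
    (∀ x y : V, |f x - f y| ≤ (G.dist x y : ℝ)) ∧ f v - f u = 1 ∧
    r = lapl G f u - lapl G f v }

/-- Nonnegative Ricci curvature on every edge. -/
def NonnegRicci (G : SimpleGraph V) [G.LocallyFinite] : Prop :=
  ∀ u v : V, G.Adj u v → 0 ≤ ricci G u v
/-!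
Since `d(o, ·)` is a test function for the curvature, its Laplacian does not increase along an edge
leading away from `o`. So a vertex at which this Laplacian is positive, a branching vertex, has only
branching inner neighbors until `o` is reached. With degrees at most three, a branching vertex has
one inner and two outer neighbors. If its inner neighbor also branches, not both of its outer
neighbors branch: otherwise lowering `d(o, ·)` at its sibling would give a test function that
violates the curvature condition. Hence the number of branching vertices on a sphere is bounded, and
the number of edges between consecutive spheres grows at most linearly. The sum of the reciprocals
of these numbers diverges, so the graph is parabolic, and Picone's identity for cutoff functions of
small energy forces a positive superharmonic function to be constant.
-/


section Laplacian

/-- `1`-Lipschitz functions for the graph distance, the test functions of `ricci`. -/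
def IsDistLipschitz (G : SimpleGraph V) (f : V → ℝ) : Prop :=
  ∀ x y : V, |f x - f y| ≤ G.dist x y

namespace IsDistLipschitz

variable {G : SimpleGraph V} {f g : V → ℝ}

lemma dist_left (hconn : G.Connected) (o : V) : IsDistLipschitz G fun x => G.dist o x := by
  intro x y
  have hxy : (G.dist o x : ℝ) ≤ G.dist o y + G.dist y x := mod_cast hconn.dist_triangle
  have hyx : (G.dist o y : ℝ) ≤ G.dist o x + G.dist x y := mod_cast hconn.dist_triangle
  rw [dist_comm (u := y)] at hxy
  exact abs_sub_le_iff.2 ⟨by linarith, by linarith⟩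

lemma add_const (hf : IsDistLipschitz G f) (c : ℝ) : IsDistLipschitz G fun x => f x + c := by
  intro x y
  rw [add_sub_add_right_eq_sub]
  exact hf x y

protected lemma min (hf : IsDistLipschitz G f) (hg : IsDistLipschitz G g) :
    IsDistLipschitz G fun x => min (f x) (g x) := fun x y =>
  (abs_min_sub_min_le_max _ _ _ _).trans (max_le (hf x y) (hg x y))

lemma abs_lapl_le_degree [G.LocallyFinite] (hf : IsDistLipschitz G f) (x : V) :
    |lapl G f x| ≤ G.degree x := by
  rw [lapl, ← card_neighborFinset_eq_degree]
  refine (Finset.abs_sum_le_sum_abs _ _).trans ?_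
  refine (Finset.sum_le_card_nsmul _ _ 1 fun y hy => ?_).trans (by simp)
  rw [mem_neighborFinset] at hy
  simpa only [dist_eq_one_iff_adj.2 hy.symm, Nat.cast_one] using hf y x

end IsDistLipschitz

variable {G : SimpleGraph V} [G.LocallyFinite]

lemma NonnegRicci.lapl_le_lapl (hric : NonnegRicci G) {u v : V} (huv : G.Adj u v) {f : V → ℝ}
    (hf : IsDistLipschitz G f) (hfuv : f v - f u = 1) : lapl G f v ≤ lapl G f u := by
  -- Without this bound the infimum defining `ricci` could be the junk value `0`.
  have hbdd : BddBelow { r : ℝ | ∃ f : V → ℝ, IsDistLipschitz G f ∧ f v - f u = 1 ∧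
      r = lapl G f u - lapl G f v } := by
    refine ⟨-(G.degree u + G.degree v), ?_⟩
    rintro r ⟨g, hg, -, rfl⟩
    have hu := (abs_le.1 (hg.abs_lapl_le_degree u)).1
    have hv := (abs_le.1 (hg.abs_lapl_le_degree v)).2
    linarith
  exact sub_nonneg.1 ((hric u v huv).trans (csInf_le hbdd ⟨f, hf, hfuv, rfl⟩))

lemma sub_le_lapl_sub_lapl {f g : V → ℝ} {u w : V} (hle : ∀ x, g x ≤ f x) (hu : g u = f u)
    (hw : G.Adj u w) : f w - g w ≤ lapl G f u - lapl G g u := by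
  have hsub : lapl G f u - lapl G g u = ∑ x ∈ G.neighborFinset u, (f x - g x) := by
    rw [lapl, lapl, ← Finset.sum_sub_distrib, hu]
    simp only [sub_sub_sub_cancel_right]
  rw [hsub]
  exact Finset.single_le_sum (f := fun x => f x - g x) (fun x _ => sub_nonneg.2 (hle x))
    ((mem_neighborFinset ..).2 hw)

end Laplacian

section Neighbors

/-- The neighbors of `x` one step farther from `o`. -/
noncomputable def outerNeighbors (G : SimpleGraph V) [G.LocallyFinite] (o x : V) : Finset V :=
  {y ∈ G.neighborFinset x | G.dist o y = G.dist o x + 1}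

/-- The neighbors of `x` one step closer to `o`. -/
noncomputable def innerNeighbors (G : SimpleGraph V) [G.LocallyFinite] (o x : V) : Finset V :=
  {y ∈ G.neighborFinset x | G.dist o x = G.dist o y + 1}

variable {G : SimpleGraph V} [G.LocallyFinite] {o x y : V}

@[simp]
lemma mem_outerNeighbors :
    y ∈ outerNeighbors G o x ↔ G.Adj x y ∧ G.dist o y = G.dist o x + 1 := by
  rw [outerNeighbors, Finset.mem_filter, mem_neighborFinset]

@[simp]
lemma mem_innerNeighbors :
    y ∈ innerNeighbors G o x ↔ G.Adj x y ∧ G.dist o x = G.dist o y + 1 := by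
  rw [innerNeighbors, Finset.mem_filter, mem_neighborFinset]

lemma mem_innerNeighbors_comm : y ∈ innerNeighbors G o x ↔ x ∈ outerNeighbors G o y := by
  rw [mem_innerNeighbors, mem_outerNeighbors, G.adj_comm]

lemma dist_trichotomy_of_adj (h : G.Adj x y) :
    G.dist o y = G.dist o x ∨ y ∈ outerNeighbors G o x ∨ y ∈ innerNeighbors G o x := by
  have := h.diff_dist_adj (u := o)
  rw [mem_outerNeighbors, mem_innerNeighbors, and_iff_right h, and_iff_right h]
  omega

lemma innerNeighbors_nonempty (hconn : G.Connected) (hx : 0 < G.dist o x) :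
    (innerNeighbors G o x).Nonempty := by
  obtain ⟨p, hp⟩ := hconn.exists_walk_length_eq_dist x o
  rw [dist_comm] at hp
  cases p with
  | nil => simp at hx
  | @cons _ y _ hxy q =>
    have hq := dist_le q
    have hdist := hxy.diff_dist_adj (u := o)
    rw [Walk.length_cons] at hp
    rw [dist_comm] at hq
    exact ⟨y, mem_innerNeighbors.2 ⟨hxy, by omega⟩⟩

lemma disjoint_innerNeighbors_outerNeighbors :
    Disjoint (innerNeighbors G o x) (outerNeighbors G o x) := by
  rw [Finset.disjoint_left]
  intro y hin hout
  rw [mem_innerNeighbors] at hin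
  rw [mem_outerNeighbors] at hout
  omega

lemma innerNeighbors_disjUnion_outerNeighbors_subset :
    (innerNeighbors G o x).disjUnion (outerNeighbors G o x)
      disjoint_innerNeighbors_outerNeighbors ⊆ G.neighborFinset x := by
  intro y hy
  rw [Finset.mem_disjUnion, mem_innerNeighbors, mem_outerNeighbors] at hy
  exact (mem_neighborFinset ..).2 (hy.elim And.left And.left)

lemma card_innerNeighbors_add_card_outerNeighbors_le :
    (innerNeighbors G o x).card + (outerNeighbors G o x).card ≤ G.degree x := by
  rw [← Finset.card_disjUnion _ _ disjoint_innerNeighbors_outerNeighbors,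
    ← card_neighborFinset_eq_degree]
  exact Finset.card_le_card innerNeighbors_disjUnion_outerNeighbors_subset

lemma lapl_dist (o x : V) :
    lapl G (fun y => (G.dist o y : ℝ)) x =
      (outerNeighbors G o x).card - (innerNeighbors G o x).card := by
  have hterm : ∀ y ∈ G.neighborFinset x, ((G.dist o y : ℝ) - G.dist o x) =
      (if G.dist o y = G.dist o x + 1 then 1 else 0) -
        (if G.dist o x = G.dist o y + 1 then 1 else 0) := by
    intro y hy
    rw [mem_neighborFinset] at hy
    obtain h | h | h := dist_trichotomy_of_adj (o := o) hy
    · simp [h]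
    · simp [(mem_outerNeighbors.1 h).2, add_assoc]
    · simp [(mem_innerNeighbors.1 h).2, add_assoc]
  rw [lapl, Finset.sum_congr rfl hterm, Finset.sum_sub_distrib, Finset.sum_boole,
    Finset.sum_boole, outerNeighbors, innerNeighbors]

lemma NonnegRicci.lapl_dist_add_one_le (hric : NonnegRicci G) (hconn : G.Connected) {u v w : V}
    (hv : v ∈ outerNeighbors G o u) (hw : w ∈ outerNeighbors G o u) (hvw : v ≠ w)
    (hadj : ¬ G.Adj v w) (hout : ∀ e ∈ outerNeighbors G o v, ¬ G.Adj w e) :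
    lapl G (fun y => (G.dist o y : ℝ)) v + 1 ≤ lapl G (fun y => (G.dist o y : ℝ)) u := by
  obtain ⟨huv, hdv⟩ := mem_outerNeighbors.1 hv
  obtain ⟨huw, hdw⟩ := mem_outerNeighbors.1 hw
  -- Lowering the distance from `o` at `w` decreases its Laplacian at `u` but not at `v`.
  let g : V → ℝ := fun x => min (G.dist o x : ℝ) (G.dist w x + G.dist o u)
  have hg_lip : IsDistLipschitz G g :=
    (IsDistLipschitz.dist_left hconn o).min ((IsDistLipschitz.dist_left hconn w).add_const _)
  have hg_le : ∀ x, g x ≤ G.dist o x := fun x => min_le_left _ _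
  have hg_eq : ∀ {x}, G.dist o x ≤ G.dist w x + G.dist o u → g x = G.dist o x := fun h =>
    min_eq_left (mod_cast h)
  have hgu : g u = G.dist o u := hg_eq (Nat.le_add_left _ _)
  have hgw : g w ≤ G.dist o u := (min_le_right _ _).trans (by simp)
  have hgv : g v = G.dist o v := hg_eq <| by
    have := hconn.pos_dist_of_ne hvw.symm
    omega
  have hg_nbr : ∀ y ∈ G.neighborFinset v, g y = G.dist o y := by
    intro y hy
    rw [mem_neighborFinset] at hy
    refine hg_eq ?_
    have hwy : w ≠ y := fun h => hadj (h ▸ hy)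
    obtain hlevel | houter | hinner := dist_trichotomy_of_adj (o := o) hy
    · have := hconn.pos_dist_of_ne hwy
      omega
    · have := hconn.one_lt_dist_of_ne_of_not_adj hwy (hout y houter)
      have := (mem_outerNeighbors.1 houter).2
      omega
    · have := (mem_innerNeighbors.1 hinner).2
      omega
  have hlapl_v : lapl G (fun y => (G.dist o y : ℝ)) v = lapl G g v := by
    rw [lapl, lapl, hgv]
    exact Finset.sum_congr rfl fun y hy => by rw [hg_nbr y hy]
  have hcurv : lapl G g v ≤ lapl G g u :=
    hric.lapl_le_lapl huv hg_lip (by rw [hgv, hgu, hdv]; push_cast; ring)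
  have hdrop := sub_le_lapl_sub_lapl hg_le hgu huw
  rw [hdw] at hdrop
  push_cast at hdrop
  linarith

end Neighbors

section Branching

/-- A vertex other than `o` with more outer than inner neighbors, that is, one at which the distance
from `o` has positive Laplacian. -/
def IsBranching (G : SimpleGraph V) [G.LocallyFinite] (o x : V) : Prop :=
  0 < G.dist o x ∧ (innerNeighbors G o x).card < (outerNeighbors G o x).card

noncomputable instance (G : SimpleGraph V) [G.LocallyFinite] (o : V) :
    DecidablePred (IsBranching G o) :=
  fun _ => inferInstanceAs (Decidable (_ ∧ _))

namespace IsBranching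

variable {G : SimpleGraph V} [G.LocallyFinite] {o u v x y : V}

lemma card_neighbors (hconn : G.Connected) (hdeg : G.degree x ≤ 3) (hx : IsBranching G o x) :
    (innerNeighbors G o x).card = 1 ∧ (outerNeighbors G o x).card = 2 := by
  have hinner := (innerNeighbors_nonempty hconn hx.1).card_pos
  have hsum := card_innerNeighbors_add_card_outerNeighbors_le (G := G) (o := o) (x := x)
  have hlt := hx.2
  omega

lemma lapl_dist_eq_one (hconn : G.Connected) (hdeg : G.degree x ≤ 3) (hx : IsBranching G o x) :
    lapl G (fun y => (G.dist o y : ℝ)) x = 1 := by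
  obtain ⟨hinner, houter⟩ := hx.card_neighbors hconn hdeg
  rw [lapl_dist, hinner, houter]
  norm_num

lemma dist_ne_of_adj (hconn : G.Connected) (hdeg : G.degree x ≤ 3) (hx : IsBranching G o x)
    (hxy : G.Adj x y) : G.dist o y ≠ G.dist o x := by
  obtain ⟨hinner, houter⟩ := hx.card_neighbors hconn hdeg
  have hneighbors := Finset.eq_of_subset_of_card_le
    (innerNeighbors_disjUnion_outerNeighbors_subset (G := G) (o := o) (x := x))
    (by rwa [Finset.card_disjUnion, hinner, houter, card_neighborFinset_eq_degree])
  rw [← mem_neighborFinset, ← hneighbors, Finset.mem_disjUnion, mem_innerNeighbors,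
    mem_outerNeighbors] at hxy
  omega

lemma of_mem_outerNeighbors (hconn : G.Connected) (hric : NonnegRicci G) (hu : 0 < G.dist o u)
    (huv : v ∈ outerNeighbors G o u) (hv : IsBranching G o v) : IsBranching G o u := by
  obtain ⟨hadj, hdist⟩ := mem_outerNeighbors.1 huv
  have hlapl := hric.lapl_le_lapl hadj (IsDistLipschitz.dist_left hconn o) (by simp [hdist])
  rw [lapl_dist, lapl_dist] at hlapl
  have hlt : ((innerNeighbors G o v).card : ℝ) < (outerNeighbors G o v).card := mod_cast hv.2
  have hgoal : ((innerNeighbors G o u).card : ℝ) < (outerNeighbors G o u).card := by linarith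
  exact ⟨hu, mod_cast hgoal⟩

lemma exists_mem_outerNeighbors (hconn : G.Connected) (hric : NonnegRicci G)
    (hx : IsBranching G o x) (hdist : 2 ≤ G.dist o x) :
    ∃ y, IsBranching G o y ∧ x ∈ outerNeighbors G o y := by
  obtain ⟨y, hy⟩ := innerNeighbors_nonempty hconn hx.1
  have hyx := (mem_innerNeighbors.1 hy).2
  rw [mem_innerNeighbors_comm] at hy
  exact ⟨y, hx.of_mem_outerNeighbors hconn hric (by omega) hy, hy⟩

lemma exists_outerNeighbor_not_isBranching (hconn : G.Connected) (hdeg : ∀ x, G.degree x ≤ 3)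
    (hric : NonnegRicci G) (hu : IsBranching G o u) (hv : IsBranching G o v)
    (huv : v ∈ outerNeighbors G o u) : ∃ e ∈ outerNeighbors G o v, ¬ IsBranching G o e := by
  by_contra! hall
  obtain ⟨w, hw, hwv⟩ := Finset.exists_mem_ne
    (by rw [(hu.card_neighbors hconn (hdeg u)).2]; exact one_lt_two) v
  have hdw := (mem_outerNeighbors.1 hw).2
  have hdv := (mem_outerNeighbors.1 huv).2
  have hvw : ¬ G.Adj v w := fun h => hv.dist_ne_of_adj hconn (hdeg v) h (hdw.trans hdv.symm)
  -- A common outer neighbor of `v` and `w` has two inner neighbors, so it is not branching.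
  have hout : ∀ e ∈ outerNeighbors G o v, ¬ G.Adj w e := by
    intro e he hwe
    have hde := (mem_outerNeighbors.1 he).2
    have hinner := ((hall e he).card_neighbors hconn (hdeg e)).1
    exact hwv (Finset.card_le_one.1 hinner.le w
      (mem_innerNeighbors.2 ⟨hwe.symm, by omega⟩) v (mem_innerNeighbors_comm.2 he))
  have hdrop := hric.lapl_dist_add_one_le hconn huv hw hwv.symm hvw hout
  rw [hu.lapl_dist_eq_one hconn (hdeg u), hv.lapl_dist_eq_one hconn (hdeg v)] at hdrop
  norm_num at hdrop

lemma card_filter_outerNeighbors_le_one (hconn : G.Connected) (hdeg : ∀ x, G.degree x ≤ 3)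
    (hric : NonnegRicci G) (hv : IsBranching G o v) (hdist : 2 ≤ G.dist o v) :
    (Finset.card {e ∈ outerNeighbors G o v | IsBranching G o e}) ≤ 1 := by
  obtain ⟨u, hu, huv⟩ := hv.exists_mem_outerNeighbors hconn hric hdist
  have hlt := Finset.card_lt_card (Finset.filter_ssubset.2
    (hu.exists_outerNeighbor_not_isBranching hconn hdeg hric hv huv))
  rw [(hv.card_neighbors hconn (hdeg v)).2] at hlt
  exact Nat.le_of_lt_succ hlt

end IsBranching

end Branching

section Growth

open scoped Classical in
/-- The closed ball around `o` as a finset. In a disconnected graph it stays inside the component of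
`o`, where `{x | G.dist o x ≤ n}` also contains all unreachable vertices. -/
noncomputable def distBall (G : SimpleGraph V) [G.LocallyFinite] (o : V) : ℕ → Finset V
  | 0 => {o}
  | n + 1 => distBall G o n ∪ (distBall G o n).biUnion fun x => G.neighborFinset x

/-- The sphere around `o` as a finset. -/
noncomputable def distSphere (G : SimpleGraph V) [G.LocallyFinite] (o : V) (r : ℕ) : Finset V :=
  {x ∈ distBall G o r | G.dist o x = r}

/-- The branching vertices at distance `r` from `o`. -/
noncomputable def branchingSphere (G : SimpleGraph V) [G.LocallyFinite] (o : V) (r : ℕ) :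
    Finset V :=
  {x ∈ distSphere G o r | IsBranching G o x}

/-- The number of edges between the spheres of radii `r` and `r + 1` around `o`. -/
noncomputable def sphereEdgeCount (G : SimpleGraph V) [G.LocallyFinite] (o : V) (r : ℕ) : ℕ :=
  ∑ x ∈ distSphere G o r, (outerNeighbors G o x).card

variable {G : SimpleGraph V} [G.LocallyFinite] {o x : V}

lemma mem_distBall (hconn : G.Connected) {n : ℕ} : x ∈ distBall G o n ↔ G.dist o x ≤ n := by
  induction n generalizing x with
  | zero => simp [distBall, hconn.dist_eq_zero_iff, eq_comm]
  | succ n ih =>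
    simp only [distBall, Finset.mem_union, Finset.mem_biUnion, mem_neighborFinset, ih]
    constructor
    · rintro (hx | ⟨y, hy, hyx⟩)
      · omega
      · have := hyx.diff_dist_adj (u := o)
        omega
    · intro hx
      refine or_iff_not_imp_left.2 fun hlt => ?_
      obtain ⟨y, hy⟩ := innerNeighbors_nonempty hconn (o := o) (x := x) (by omega)
      rw [mem_innerNeighbors] at hy
      exact ⟨y, by omega, hy.1.symm⟩

lemma mem_distSphere (hconn : G.Connected) {r : ℕ} : x ∈ distSphere G o r ↔ G.dist o x = r := by
  rw [distSphere, Finset.mem_filter, mem_distBall hconn, and_iff_right_iff_imp]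
  exact Eq.le

lemma mem_branchingSphere (hconn : G.Connected) {r : ℕ} :
    x ∈ branchingSphere G o r ↔ G.dist o x = r ∧ IsBranching G o x := by
  rw [branchingSphere, Finset.mem_filter, mem_distSphere hconn]

lemma sum_distBall (hconn : G.Connected) (n : ℕ) (F : V → ℝ) :
    ∑ x ∈ distBall G o n, F x = ∑ r ∈ Finset.range (n + 1), ∑ x ∈ distSphere G o r, F x := by
  rw [← Finset.sum_fiberwise_of_maps_to (g := G.dist o) (t := Finset.range (n + 1))
    fun x hx => Finset.mem_range_succ_iff.2 ((mem_distBall hconn).1 hx)]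
  refine Finset.sum_congr rfl fun r hr => Finset.sum_congr ?_ fun _ _ => rfl
  ext x
  rw [Finset.mem_filter, mem_distBall hconn, mem_distSphere hconn, and_iff_right_iff_imp]
  exact fun hx => hx.le.trans (Finset.mem_range_succ_iff.1 hr)

lemma card_branchingSphere_succ_le (hconn : G.Connected) (hdeg : ∀ x, G.degree x ≤ 3)
    (hric : NonnegRicci G) {r : ℕ} (hr : 2 ≤ r) :
    (branchingSphere G o (r + 1)).card ≤ (branchingSphere G o r).card := by
  classical
  have hsub : branchingSphere G o (r + 1) ⊆ (branchingSphere G o r).biUnion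
      fun v => {e ∈ outerNeighbors G o v | IsBranching G o e} := by
    intro x hx
    obtain ⟨hxr, hx⟩ := (mem_branchingSphere hconn).1 hx
    obtain ⟨y, hy, hyx⟩ := hx.exists_mem_outerNeighbors hconn hric (by omega)
    have hdist := (mem_outerNeighbors.1 hyx).2
    exact Finset.mem_biUnion.2
      ⟨y, (mem_branchingSphere hconn).2 ⟨by omega, hy⟩, Finset.mem_filter.2 ⟨hyx, hx⟩⟩
  refine (Finset.card_le_card hsub).trans
    ((Finset.card_biUnion_le_card_mul _ _ 1 fun v hv => ?_).trans_eq (mul_one _))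
  obtain ⟨hvr, hv⟩ := (mem_branchingSphere hconn).1 hv
  exact hv.card_filter_outerNeighbors_le_one hconn hdeg hric (hvr ▸ hr)

lemma exists_card_branchingSphere_le (hconn : G.Connected) (hdeg : ∀ x, G.degree x ≤ 3)
    (hric : NonnegRicci G) (o : V) : ∃ T, ∀ r, (branchingSphere G o r).card ≤ T := by
  have hanti : Antitone fun r => (branchingSphere G o (r + 2)).card :=
    antitone_nat_of_succ_le fun r =>
      card_branchingSphere_succ_le hconn hdeg hric (Nat.le_add_left 2 r)
  refine ⟨(branchingSphere G o 0).card + (branchingSphere G o 1).card +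
    (branchingSphere G o 2).card, fun r => ?_⟩
  match r with
  | 0 => omega
  | 1 => omega
  | r + 2 => exact (hanti (Nat.zero_le r)).trans (Nat.le_add_left _ _)

lemma sphereEdgeCount_eq_sum_card_innerNeighbors (hconn : G.Connected) (r : ℕ) :
    sphereEdgeCount G o r = ∑ x ∈ distSphere G o (r + 1), (innerNeighbors G o x).card := by
  classical
  rw [sphereEdgeCount]
  convert Finset.sum_card_bipartiteAbove_eq_sum_card_bipartiteBelow (s := distSphere G o r)
    (t := distSphere G o (r + 1)) G.Adj using 3 with x hx x hx
  · ext y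
    rw [mem_distSphere hconn] at hx
    simp [Finset.mem_bipartiteAbove, mem_distSphere hconn, hx, and_comm]
  · ext y
    rw [mem_distSphere hconn] at hx
    simp [Finset.mem_bipartiteBelow, mem_distSphere hconn, hx, and_comm, G.adj_comm, eq_comm]

lemma sphereEdgeCount_succ_le (hconn : G.Connected) (hdeg : ∀ x, G.degree x ≤ 3) (r : ℕ) :
    sphereEdgeCount G o (r + 1) ≤ sphereEdgeCount G o r + (branchingSphere G o (r + 1)).card := by
  rw [sphereEdgeCount_eq_sum_card_innerNeighbors hconn r, sphereEdgeCount, branchingSphere,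
    Finset.card_filter, ← Finset.sum_add_distrib]
  refine Finset.sum_le_sum fun x hx => ?_
  rw [mem_distSphere hconn] at hx
  split_ifs with hbranch
  · obtain ⟨hinner, houter⟩ := hbranch.card_neighbors hconn (hdeg x)
    rw [hinner, houter]
  · exact not_lt.1 fun hlt => hbranch ⟨by omega, hlt⟩

lemma exists_sphereEdgeCount_le (hconn : G.Connected) (hdeg : ∀ x, G.degree x ≤ 3)
    (hric : NonnegRicci G) (o : V) : ∃ C, 0 < C ∧ ∀ r, sphereEdgeCount G o r ≤ C * (r + 1) := by
  obtain ⟨T, hT⟩ := exists_card_branchingSphere_le hconn hdeg hric o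
  refine ⟨sphereEdgeCount G o 0 + T + 1, Nat.succ_pos _, fun r => ?_⟩
  induction r with
  | zero => omega
  | succ r ih =>
    have hstep := sphereEdgeCount_succ_le (o := o) hconn hdeg r
    have hbranch := hT (r + 1)
    rw [mul_add_one]
    omega

end Growth

section Parabolicity

open scoped Classical in
/-- The Dirichlet energy of `φ` on the subgraph induced on `B`, with every edge counted twice. -/
noncomputable def energyOn (G : SimpleGraph V) (B : Finset V) (φ : V → ℝ) : ℝ :=
  ∑ x ∈ B, ∑ y ∈ B with G.Adj x y, (φ x - φ y) ^ 2

/-- Zero capacity of finite sets, equivalently recurrence of the simple random walk: finitely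
supported functions equal to `1` on a given finite set can have arbitrarily small energy. As `B`
contains the support of `φ` together with all its neighbors, `energyOn G B φ` is the energy of `φ`
on all of `G`. -/
def IsParabolic (G : SimpleGraph V) [G.LocallyFinite] : Prop :=
  ∀ K : Finset V, ∀ ε > 0, ∃ (B : Finset V) (φ : V → ℝ), (∀ x ∈ K, φ x = 1) ∧
    (∀ x, φ x ≠ 0 → x ∈ B ∧ G.neighborFinset x ⊆ B) ∧ energyOn G B φ ≤ ε

open scoped Classical in
lemma sum_sum_adj_swap (G : SimpleGraph V) (B : Finset V) (F : V → V → ℝ) :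
    ∑ x ∈ B, ∑ y ∈ B with G.Adj x y, F y x = ∑ x ∈ B, ∑ y ∈ B with G.Adj x y, F x y :=
  Finset.sum_comm' fun x y => by
    simp only [Finset.mem_filter, G.adj_comm x y]
    tauto

variable {G : SimpleGraph V} [G.LocallyFinite] {h φ : V → ℝ} {a b : V}

open scoped Classical in
lemma sum_sum_mul_sub_eq_sum_mul_lapl {B : Finset V} {c : V → ℝ}
    (hB : ∀ x, c x ≠ 0 → G.neighborFinset x ⊆ B) (h : V → ℝ) :
    ∑ x ∈ B, ∑ y ∈ B with G.Adj x y, c x * (h y - h x) = ∑ x ∈ B, c x * lapl G h x := by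
  refine Finset.sum_congr rfl fun x _ => ?_
  rw [← Finset.mul_sum]
  by_cases hx : c x = 0
  · rw [hx, zero_mul, zero_mul]
  · have hneighbors : {y ∈ B | G.Adj x y} = G.neighborFinset x := by
      ext y
      rw [Finset.mem_filter, mem_neighborFinset, and_iff_right_iff_imp]
      exact fun hxy => hB x hx ((mem_neighborFinset ..).2 hxy)
    rw [hneighbors, lapl]

lemma picone_identity {p q s t : ℝ} (hp : p ≠ 0) (hq : q ≠ 0) :
    (s * q - t * p) ^ 2 / (p * q) =
      (s - t) ^ 2 + s ^ 2 / p * (q - p) + t ^ 2 / q * (p - q) := by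
  field_simp
  ring

lemma sq_div_le_energyOn (hsuper : ∀ x, lapl G h x ≤ 0) (hpos : ∀ x, 0 < h x) {B : Finset V}
    (hB : ∀ x, φ x ≠ 0 → G.neighborFinset x ⊆ B) (ha : a ∈ B) (hb : b ∈ B) (hab : G.Adj a b) :
    (φ a * h b - φ b * h a) ^ 2 / (h a * h b) ≤ energyOn G B φ := by
  classical
  let Q : V → V → ℝ := fun x y => (φ x * h y - φ y * h x) ^ 2 / (h x * h y)
  let F : V → V → ℝ := fun x y => φ x ^ 2 / h x * (h y - h x)
  have hQ : ∀ x y, 0 ≤ Q x y := fun x y =>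
    div_nonneg (sq_nonneg _) (mul_pos (hpos x) (hpos y)).le
  have hF : ∑ x ∈ B, ∑ y ∈ B with G.Adj x y, F x y ≤ 0 := by
    rw [sum_sum_mul_sub_eq_sum_mul_lapl (fun x hx => hB x fun h₀ => hx (by simp [h₀])) h]
    exact Finset.sum_nonpos fun x _ => mul_nonpos_of_nonneg_of_nonpos
      (div_nonneg (sq_nonneg _) (hpos x).le) (hsuper x)
  calc Q a b
      ≤ ∑ y ∈ B with G.Adj a y, Q a y :=
        Finset.single_le_sum (fun y _ => hQ a y) (Finset.mem_filter.2 ⟨hb, hab⟩)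
    _ ≤ ∑ x ∈ B, ∑ y ∈ B with G.Adj x y, Q x y :=
        Finset.single_le_sum (f := fun x => ∑ y ∈ B with G.Adj x y, Q x y)
          (fun x _ => Finset.sum_nonneg fun y _ => hQ x y) ha
    _ = energyOn G B φ + ∑ x ∈ B, ∑ y ∈ B with G.Adj x y, F x y +
          ∑ x ∈ B, ∑ y ∈ B with G.Adj x y, F y x := by
        simp only [Q, F, picone_identity (hpos _).ne' (hpos _).ne', Finset.sum_add_distrib,
          energyOn]
    _ ≤ energyOn G B φ := by
        rw [sum_sum_adj_swap G B F]
        linarith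

namespace IsParabolic

lemma eq_of_adj (hG : IsParabolic G) (hsuper : ∀ x, lapl G h x ≤ 0) (hpos : ∀ x, 0 < h x)
    (hab : G.Adj a b) : h a = h b := by
  classical
  have hsmall : ∀ ε > 0, (h b - h a) ^ 2 / (h a * h b) ≤ ε := by
    intro ε hε
    obtain ⟨B, φ, hK, hB, henergy⟩ := hG {a, b} ε hε
    have ha : φ a = 1 := hK a (by simp)
    have hb : φ b = 1 := hK b (by simp)
    have hle := sq_div_le_energyOn hsuper hpos (fun x hx => (hB x hx).2)
      (hB a (by simp [ha])).1 (hB b (by simp [hb])).1 hab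
    rw [ha, hb, one_mul, one_mul] at hle
    exact hle.trans henergy
  have hsq : (h b - h a) ^ 2 ≤ 0 := by
    have hle := le_of_forall_gt_imp_ge_of_dense hsmall
    rwa [div_le_iff₀ (mul_pos (hpos a) (hpos b)), zero_mul] at hle
  exact (sub_eq_zero.1 (sq_nonpos_iff _ |>.1 hsq)).symm

theorem eq_of_superharmonic (hG : IsParabolic G) (hconn : G.Connected)
    (hsuper : ∀ x, lapl G h x ≤ 0) (hpos : ∀ x, 0 < h x) (x y : V) : h x = h y := by
  obtain ⟨p⟩ := hconn.preconnected x y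
  induction p with
  | nil => rfl
  | cons hadj _ ih => exact (hG.eq_of_adj hsuper hpos hadj).trans ih

end IsParabolic

end Parabolicity

section NashWilliams

variable {G : SimpleGraph V} [G.LocallyFinite] {o : V}

lemma sq_sub_radial_eq {x y : V} (g : ℕ → ℝ) (hxy : G.Adj x y) :
    (g (G.dist o x) - g (G.dist o y)) ^ 2 =
      (if G.dist o y = G.dist o x + 1 then (g (G.dist o x) - g (G.dist o x + 1)) ^ 2 else 0) +
        if G.dist o x = G.dist o y + 1 then (g (G.dist o y) - g (G.dist o y + 1)) ^ 2 else 0 := by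
  obtain h | h | h := dist_trichotomy_of_adj (o := o) hxy
  · simp [h]
  · simp [(mem_outerNeighbors.1 h).2, add_assoc]
  · simp [(mem_innerNeighbors.1 h).2, add_assoc, sub_sq_comm]

lemma energyOn_distBall_radial_le (hconn : G.Connected) (o : V) (g : ℕ → ℝ) (N : ℕ) :
    energyOn G (distBall G o N) (fun x => g (G.dist o x)) ≤
      2 * ∑ r ∈ Finset.range (N + 1), sphereEdgeCount G o r * (g r - g (r + 1)) ^ 2 := by
  classical
  let P : V → V → ℝ := fun x y =>
    if G.dist o y = G.dist o x + 1 then (g (G.dist o x) - g (G.dist o x + 1)) ^ 2 else 0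
  have hrow : ∀ x, ∑ y ∈ distBall G o N with G.Adj x y, P x y ≤
      (outerNeighbors G o x).card * (g (G.dist o x) - g (G.dist o x + 1)) ^ 2 := by
    intro x
    rw [← Finset.sum_filter, Finset.sum_const, nsmul_eq_mul]
    gcongr
    intro y hy
    rw [Finset.mem_filter, Finset.mem_filter] at hy
    exact mem_outerNeighbors.2 ⟨hy.1.2, hy.2⟩
  calc energyOn G (distBall G o N) (fun x => g (G.dist o x))
      = ∑ x ∈ distBall G o N, ∑ y ∈ distBall G o N with G.Adj x y, (P x y + P y x) :=
        Finset.sum_congr rfl fun x _ => Finset.sum_congr rfl fun y hy =>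
          sq_sub_radial_eq g (Finset.mem_filter.1 hy).2
    _ = 2 * ∑ x ∈ distBall G o N, ∑ y ∈ distBall G o N with G.Adj x y, P x y := by
        simp only [Finset.sum_add_distrib]
        rw [sum_sum_adj_swap G _ P, two_mul]
    _ ≤ 2 * ∑ x ∈ distBall G o N,
          (outerNeighbors G o x).card * (g (G.dist o x) - g (G.dist o x + 1)) ^ 2 := by
        gcongr with x
        exact hrow x
    _ = 2 * ∑ r ∈ Finset.range (N + 1), sphereEdgeCount G o r * (g r - g (r + 1)) ^ 2 := by
        rw [sum_distBall hconn]
        congr 1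
        refine Finset.sum_congr rfl fun r _ => ?_
        rw [sphereEdgeCount, Nat.cast_sum, Finset.sum_mul]
        exact Finset.sum_congr rfl fun x hx => by rw [(mem_distSphere hconn).1 hx]

lemma exists_le_sum_Ico_of_not_summable {w : ℕ → ℝ} (hw : ∀ r, 0 ≤ w r) (hsum : ¬ Summable w)
    (R : ℕ) (M : ℝ) : ∃ N > R, M ≤ ∑ r ∈ Finset.Ico R N, w r := by
  have htop := (not_summable_iff_tendsto_nat_atTop_of_nonneg hw).1 hsum
  obtain ⟨N, hN, hRN⟩ := ((htop.eventually_ge_atTop (M + ∑ r ∈ Finset.range R, w r)).and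
    (Filter.eventually_gt_atTop R)).exists
  exact ⟨N, hRN, by rwa [Finset.sum_Ico_eq_sub _ hRN.le, le_sub_iff_add_le]⟩

lemma exists_cutoff_sum_mul_sq_eq {c : ℕ → ℝ} (hc : ∀ r, 0 < c r) {R N : ℕ} (hRN : R < N) :
    ∃ g : ℕ → ℝ, (∀ r ≤ R, g r = 1) ∧ (∀ r ≥ N, g r = 0) ∧
      ∑ r ∈ Finset.range (N + 1), c r * (g r - g (r + 1)) ^ 2 =
        (∑ r ∈ Finset.Ico R N, (c r)⁻¹)⁻¹ := by
  set W := ∑ r ∈ Finset.Ico R N, (c r)⁻¹ with hW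
  have hW_pos : 0 < W :=
    Finset.sum_pos (fun r _ => inv_pos.2 (hc r)) (Finset.nonempty_Ico.2 hRN)
  -- Equality in Cauchy–Schwarz forces the decrement at `r` to be proportional to `(c r)⁻¹`.
  let g : ℕ → ℝ := fun r => (∑ i ∈ Finset.Ico (max R r) N, (c i)⁻¹) / W
  have hg_one : ∀ r ≤ R, g r = 1 := fun r hr => by
    simp only [g]
    rw [max_eq_left hr, div_self hW_pos.ne']
  have hg_zero : ∀ r ≥ N, g r = 0 := fun r hr => by
    simp only [g]
    rw [Finset.Ico_eq_empty_of_le (hr.trans (le_max_right R r)), Finset.sum_empty, zero_div]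
  have hg_step : ∀ r ∈ Finset.Ico R N, g r - g (r + 1) = (c r)⁻¹ / W := fun r hr => by
    obtain ⟨hRr, hrN⟩ := Finset.mem_Ico.1 hr
    simp only [g]
    rw [max_eq_right hRr, max_eq_right (hRr.trans r.le_succ),
      Finset.sum_eq_sum_Ico_succ_bot hrN, ← sub_div, add_sub_cancel_right]
  refine ⟨g, hg_one, hg_zero, ?_⟩
  calc ∑ r ∈ Finset.range (N + 1), c r * (g r - g (r + 1)) ^ 2
      = ∑ r ∈ Finset.Ico R N, c r * (g r - g (r + 1)) ^ 2 := by
        refine (Finset.sum_subset (fun r hr => ?_) fun r _ hr => ?_).symm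
        · exact Finset.mem_range.2 ((Finset.mem_Ico.1 hr).2.trans N.lt_succ_self)
        · rw [Finset.mem_Ico, not_and_or, not_le, not_lt] at hr
          rcases hr with hr | hr
          · simp [hg_one r hr.le, hg_one (r + 1) hr]
          · simp [hg_zero r hr, hg_zero (r + 1) (hr.trans r.le_succ)]
    _ = ∑ r ∈ Finset.Ico R N, (c r)⁻¹ / W ^ 2 := by
        refine Finset.sum_congr rfl fun r hr => ?_
        have := (hc r).ne'
        rw [hg_step r hr]
        field_simp
    _ = W⁻¹ := by
        rw [← Finset.sum_div, ← hW]
        field_simp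

/-- The **Nash-Williams criterion**, for the cutsets between consecutive spheres. -/
theorem IsParabolic.of_not_summable_inv (hconn : G.Connected) {c : ℕ → ℝ} (hc : ∀ r, 0 < c r)
    (hle : ∀ r, sphereEdgeCount G o r ≤ c r) (hsum : ¬ Summable fun r => (c r)⁻¹) :
    IsParabolic G := by
  intro K ε hε
  obtain ⟨N, hRN, hN⟩ := exists_le_sum_Ico_of_not_summable (fun r => (inv_pos.2 (hc r)).le) hsum
    (K.sup (G.dist o)) (ε / 2)⁻¹
  obtain ⟨g, hg_one, hg_zero, hg_sum⟩ := exists_cutoff_sum_mul_sq_eq hc hRN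
  have hlt : ∀ x, g (G.dist o x) ≠ 0 → G.dist o x < N := fun x hx =>
    not_le.1 fun h => hx (hg_zero _ h)
  refine ⟨distBall G o N, fun x => g (G.dist o x), fun x hx => hg_one _ (Finset.le_sup hx),
    fun x hx => ⟨(mem_distBall hconn).2 (hlt x hx).le, fun y hy => ?_⟩, ?_⟩
  · have hdist := ((mem_neighborFinset ..).1 hy).diff_dist_adj (u := o)
    have := hlt x hx
    exact (mem_distBall hconn).2 (by omega)
  · calc energyOn G (distBall G o N) (fun x => g (G.dist o x))
        ≤ 2 * ∑ r ∈ Finset.range (N + 1), sphereEdgeCount G o r * (g r - g (r + 1)) ^ 2 :=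
          energyOn_distBall_radial_le hconn o g N
      _ ≤ 2 * ∑ r ∈ Finset.range (N + 1), c r * (g r - g (r + 1)) ^ 2 := by
          gcongr with r
          exact hle r
      _ ≤ ε := by
          rw [hg_sum]
          linarith [inv_le_of_inv_le₀ (half_pos hε) hN]

end NashWilliams

theorem NonnegRicci.isParabolic {G : SimpleGraph V} [G.LocallyFinite] (hric : NonnegRicci G)
    (hconn : G.Connected) (hdeg : ∀ v, G.degree v ≤ 3) : IsParabolic G := by
  obtain ⟨o⟩ := hconn.nonempty
  obtain ⟨C, hC, hcount⟩ := exists_sphereEdgeCount_le hconn hdeg hric o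
  refine IsParabolic.of_not_summable_inv (o := o) (c := fun r => C * ((r : ℝ) + 1)) hconn
    (fun r => by positivity) (fun r => mod_cast hcount r) fun hsum => ?_
  simp only [mul_inv] at hsum
  rw [summable_mul_left_iff (by positivity)] at hsum
  exact Real.not_summable_natCast_inv ((summable_nat_add_iff 1).1 (mod_cast hsum))

theorem positive_harmonic_constant_general (G : SimpleGraph V) [G.LocallyFinite]
    (hconn : G.Connected) (hdeg : ∀ v : V, G.degree v ≤ 3) (hric : NonnegRicci G)
    (f : V → ℝ) (hsuper : ∀ x : V, lapl G f x ≤ 0) (hpos : ∀ x : V, 0 < f x) :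
    ∀ x y : V, f x = f y :=
  (hric.isParabolic hconn hdeg).eq_of_superharmonic hconn hsuper hpos

/-- Every positive harmonic function on an infinite, connected, locally
finite simple graph with maximum degree at most 3 and nonnegative Ricci curvature is
constant. -/
theorem positive_harmonic_constant (G : SimpleGraph V) [G.LocallyFinite] [Infinite V]
    (hconn : G.Connected) (hdeg : ∀ v : V, G.degree v ≤ 3) (hric : NonnegRicci G)
    (f : V → ℝ) (hharm : ∀ x : V, lapl G f x = 0) (hpos : ∀ x : V, 0 < f x) :
    ∀ x y : V, f x = f y :=
  positive_harmonic_constant_general G hconn hdeg hric f (fun x => (hharm x).le) hpos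
end

section
/- Let G = (V,E) be a connected, locally finite, simple graph with maximum degree at most 3 (and at least two vertices). Then the combinatorial Ricci curvature κ_C(u,v) is nonnegative for every edge {u,v} if and only if the normalized Ricci curvature κ_N(u,v) is nonnegative for every edge {u,v}. -/
/-!
A `1`-Lipschitz function `f` with `f v - f u = 1` along an edge satisfies `Δ f v ≤ deg v - 2` and
`2 - deg u ≤ Δ f u`, where `Δ` is the combinatorial Laplacian. For degrees `1 ≤ deg u ≤ deg v ≤ 3`
this leaves little to decide. If `deg u = deg v`, the two curvatures differ by a positive factor,
and if `deg u = 1`, both are nonnegative. If `deg u = 2` and `deg v = 3`, let `x` be the other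
neighbour of `u`. When both other neighbours of `v` are at distance `3` from `x`, the distance
from `x` shows that both curvatures are negative; when one of them is at distance at most `2`,
transporting `x` to it shows that both are nonnegative.
-/

open SimpleGraph

variable {V : Type*}

/-- Normalized graph Laplacian. -/
noncomputable def laplN (G : SimpleGraph V) [G.LocallyFinite] (f : V → ℝ) (x : V) : ℝ :=
  (1 / (G.degree x : ℝ)) * ∑ y ∈ G.neighborFinset x, (f y - f x)

/-- Normalized Lin-Lu-Yau-Ollivier Ricci curvature (limit-free definition). -/
noncomputable def ricciN (G : SimpleGraph V) [G.LocallyFinite] (u v : V) : ℝ :=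
  sInf { r : ℝ | ∃ f : V → ℝ,
    (∀ x y : V, |f x - f y| ≤ (G.dist x y : ℝ)) ∧ f v - f u = 1 ∧
    r = laplN G f u - laplN G f v }

section Graph

variable {G : SimpleGraph V} {u v w x y : V}

theorem exists_adj_ne_of_two_le_degree [Fintype (G.neighborSet v)] (hv : 2 ≤ G.degree v)
    (u : V) : ∃ y, G.Adj v y ∧ y ≠ u := by
  obtain ⟨y, hy, hyu⟩ := Finset.exists_mem_ne (s := G.neighborFinset v) hv u
  exact ⟨y, (G.mem_neighborFinset v y).1 hy, hyu⟩

theorem eq_of_adj_of_ne_of_degree_le_two [Fintype (G.neighborSet u)] (hu : G.degree u ≤ 2)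
    (hv : G.Adj u v) (hw : G.Adj u w) (hwv : w ≠ v) (hx : G.Adj u x) (hxv : x ≠ v) : w = x := by
  classical
  have hcard : ((G.neighborFinset u).erase v).card ≤ 1 := by
    rw [Finset.card_erase_of_mem (by simpa using hv), card_neighborFinset_eq_degree]
    exact Nat.sub_le_of_le_add hu
  exact Finset.card_le_one.1 hcard w (by simp [hw, hwv]) x (by simp [hx, hxv])

theorem dist_eq_two_of_two_lt_dist (hconn : G.Connected) (hx : G.Adj u x) (h : G.Adj u v)
    (hy : G.Adj v y) (hfar : 2 < G.dist x y) : G.dist x v = 2 := by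
  have hxv := hconn.dist_triangle (u := x) (v := u) (w := v)
  have hxy := hconn.dist_triangle (u := x) (v := v) (w := y)
  rw [dist_eq_one_iff_adj.2 hx.symm, dist_eq_one_iff_adj.2 h] at hxv
  rw [dist_eq_one_iff_adj.2 hy] at hxy
  lia

end Graph

/-- The competitors in the infimum defining the curvature of the edge `{u, v}`, that is, the
admissible Kantorovich potentials: functions that are `1`-Lipschitz for the graph distance and have
unit slope from `u` to `v`. -/
structure IsEdgePotential (G : SimpleGraph V) (u v : V) (f : V → ℝ) : Prop where
  abs_sub_le_dist : ∀ x y : V, |f x - f y| ≤ (G.dist x y : ℝ)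
  sub_eq_one : f v - f u = 1

/-- The Lin-Lu-Yau-Ollivier curvature of `{u, v}` for an arbitrary operator `L` in place of the
Laplacian. The condition on `f` is `IsEdgePotential G u v f`, spelled out so that `ricci` and
`ricciN` are definitionally the cases `L = lapl G` and `L = laplN G`. -/
noncomputable def edgeCurvature (G : SimpleGraph V) (L : (V → ℝ) → V → ℝ) (u v : V) : ℝ :=
  sInf { r : ℝ | ∃ f : V → ℝ,
    (∀ x y : V, |f x - f y| ≤ (G.dist x y : ℝ)) ∧ f v - f u = 1 ∧
    r = L f u - L f v }

namespace IsEdgePotential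

variable {G : SimpleGraph V} {u v x y : V} {f : V → ℝ}

theorem neg (hf : IsEdgePotential G u v f) : IsEdgePotential G v u (-f) where
  abs_sub_le_dist x y := by
    rw [Pi.neg_apply, Pi.neg_apply, neg_sub_neg, abs_sub_comm]
    exact hf.abs_sub_le_dist x y
  sub_eq_one := by rw [Pi.neg_apply, Pi.neg_apply, neg_sub_neg, hf.sub_eq_one]

theorem sub_le_dist (hf : IsEdgePotential G u v f) (x y : V) : f y - f x ≤ G.dist x y :=
  (abs_sub_le_iff.1 (hf.abs_sub_le_dist x y)).2

theorem abs_sub_le_one_of_adj (hf : IsEdgePotential G u v f) (h : G.Adj x y) :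
    |f y - f x| ≤ 1 := by
  simpa [dist_eq_one_iff_adj.2 h.symm] using hf.abs_sub_le_dist y x

theorem of_dist (hconn : G.Connected) (h : G.dist x v = G.dist x u + 1) :
    IsEdgePotential G u v (fun z => (G.dist x z : ℝ)) where
  abs_sub_le_dist y z := by
    have hy : (G.dist x y : ℝ) ≤ G.dist x z + G.dist y z := by
      rw [dist_comm (u := y)]
      exact_mod_cast hconn.dist_triangle
    have hz : (G.dist x z : ℝ) ≤ G.dist x y + G.dist y z := by
      exact_mod_cast hconn.dist_triangle
    exact abs_sub_le_iff.2 ⟨by linarith, by linarith⟩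
  sub_eq_one := by simp [h]

end IsEdgePotential

section EdgeCurvature

variable {G : SimpleGraph V} {L : (V → ℝ) → V → ℝ} {u v : V}

theorem edgeCurvature_nonneg_iff {C : V → ℝ}
    (hL : ∀ f, IsEdgePotential G u v f → ∀ x, |L f x| ≤ C x) :
    0 ≤ edgeCurvature G L u v ↔ ∀ f, IsEdgePotential G u v f → L f v ≤ L f u := by
  constructor
  · intro h f hf
    refine sub_nonneg.1 (h.trans (csInf_le ⟨-C u - C v, ?_⟩
      ⟨f, hf.abs_sub_le_dist, hf.sub_eq_one, rfl⟩))
    rintro _ ⟨g, hlip, hslope, rfl⟩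
    have hg : IsEdgePotential G u v g := ⟨hlip, hslope⟩
    exact sub_le_sub (neg_le_of_abs_le (hL g hg u)) (le_of_abs_le (hL g hg v))
  · intro h
    refine Real.sInf_nonneg ?_
    rintro _ ⟨f, hlip, hslope, rfl⟩
    exact sub_nonneg.2 (h f ⟨hlip, hslope⟩)

theorem edgeCurvature_comm (hL : ∀ f x, L (-f) x = -L f x) (u v : V) :
    edgeCurvature G L u v = edgeCurvature G L v u := by
  have hsub (a b : V) :
      { r : ℝ | ∃ f : V → ℝ, (∀ x y : V, |f x - f y| ≤ (G.dist x y : ℝ)) ∧ f b - f a = 1 ∧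
        r = L f a - L f b } ⊆
      { r : ℝ | ∃ f : V → ℝ, (∀ x y : V, |f x - f y| ≤ (G.dist x y : ℝ)) ∧ f a - f b = 1 ∧
        r = L f b - L f a } := by
    rintro _ ⟨f, hlip, hslope, rfl⟩
    have hf : IsEdgePotential G a b f := ⟨hlip, hslope⟩
    exact ⟨-f, hf.neg.abs_sub_le_dist, hf.neg.sub_eq_one, by rw [hL, hL, neg_sub_neg]⟩
  exact congrArg sInf ((hsub u v).antisymm (hsub v u))

end EdgeCurvature

section Laplacian

variable {G : SimpleGraph V} [G.LocallyFinite] {u v x y : V} {f : V → ℝ}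

theorem lapl_neg (f : V → ℝ) (x : V) : lapl G (-f) x = -lapl G f x := by
  simp only [lapl, Pi.neg_apply, neg_sub_neg, ← Finset.sum_neg_distrib, neg_sub]

theorem laplN_eq_div (f : V → ℝ) (x : V) : laplN G f x = lapl G f x / G.degree x :=
  one_div_mul_eq_div _ _

theorem laplN_neg (f : V → ℝ) (x : V) : laplN G (-f) x = -laplN G f x := by
  rw [laplN_eq_div, laplN_eq_div, lapl_neg, neg_div]

namespace IsEdgePotential

theorem abs_lapl_le_degree (hf : IsEdgePotential G u v f) (x : V) :
    |lapl G f x| ≤ G.degree x :=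
  calc |lapl G f x| ≤ ∑ y ∈ G.neighborFinset x, |f y - f x| := Finset.abs_sum_le_sum_abs _ _
    _ ≤ ∑ _y ∈ G.neighborFinset x, (1 : ℝ) :=
      Finset.sum_le_sum fun y hy => hf.abs_sub_le_one_of_adj ((G.mem_neighborFinset x y).1 hy)
    _ = G.degree x := by simp

theorem abs_laplN_le_one (hf : IsEdgePotential G u v f) (x : V) : |laplN G f x| ≤ 1 := by
  rw [laplN_eq_div, abs_div, Nat.abs_cast]
  exact div_le_one_of_le₀ (hf.abs_lapl_le_degree x) (Nat.cast_nonneg _)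

theorem lapl_eq_degree_sub_two_sub_sum [DecidableEq V] (hf : IsEdgePotential G u v f)
    (h : G.Adj u v) :
    lapl G f v = G.degree v - 2 - ∑ y ∈ (G.neighborFinset v).erase u, (1 - (f y - f v)) := by
  have hu : u ∈ G.neighborFinset v := (G.mem_neighborFinset v u).2 h.symm
  have hcard : (((G.neighborFinset v).erase u).card : ℝ) = G.degree v - 1 := by
    rw [Finset.cast_card_erase_of_mem hu, card_neighborFinset_eq_degree]
  have hsum : ∑ y ∈ (G.neighborFinset v).erase u, (1 - (f y - f v)) =
      G.degree v - 1 - ∑ y ∈ (G.neighborFinset v).erase u, (f y - f v) := by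
    rw [Finset.sum_sub_distrib, Finset.sum_const, nsmul_one, hcard]
  rw [lapl, ← Finset.add_sum_erase _ _ hu, hsum]
  linarith [hf.sub_eq_one]

theorem lapl_le_degree_sub_two (hf : IsEdgePotential G u v f) (h : G.Adj u v) :
    lapl G f v ≤ G.degree v - 2 := by
  classical
  rw [hf.lapl_eq_degree_sub_two_sub_sum h]
  refine sub_le_self _ (Finset.sum_nonneg fun y hy => sub_nonneg.2 ?_)
  exact le_of_abs_le (hf.abs_sub_le_one_of_adj (by simpa using Finset.mem_of_mem_erase hy))

theorem two_sub_degree_le_lapl (hf : IsEdgePotential G u v f) (h : G.Adj u v) :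
    2 - G.degree u ≤ lapl G f u := by
  have := hf.neg.lapl_le_degree_sub_two h.symm
  rw [lapl_neg] at this
  linarith

theorem lapl_le_degree_sub_three_add (hf : IsEdgePotential G u v f) (h : G.Adj u v)
    (hy : G.Adj v y) (hyu : y ≠ u) : lapl G f v ≤ G.degree v - 3 + (f y - f v) := by
  classical
  have hsingle : 1 - (f y - f v) ≤ ∑ z ∈ (G.neighborFinset v).erase u, (1 - (f z - f v)) := by
    refine Finset.single_le_sum (f := fun z => 1 - (f z - f v)) (fun z hz => sub_nonneg.2 ?_)
      (by simp [hy, hyu])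
    exact le_of_abs_le (hf.abs_sub_le_one_of_adj (by simpa using Finset.mem_of_mem_erase hz))
  rw [hf.lapl_eq_degree_sub_two_sub_sum h]
  linarith

theorem three_sub_degree_add_le_lapl (hf : IsEdgePotential G u v f) (h : G.Adj u v)
    (hx : G.Adj u x) (hxv : x ≠ v) : 3 - G.degree u + (f x - f u) ≤ lapl G f u := by
  have := hf.neg.lapl_le_degree_sub_three_add h.symm hx hxv
  rw [lapl_neg, Pi.neg_apply, Pi.neg_apply] at this
  linarith

theorem degree_sub_two_le_lapl (hf : IsEdgePotential G u v f) (h : G.Adj u v)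
    (hout : ∀ y, G.Adj v y → y ≠ u → 1 ≤ f y - f v) : G.degree v - 2 ≤ lapl G f v := by
  classical
  rw [hf.lapl_eq_degree_sub_two_sub_sum h]
  refine (le_sub_self_iff _).2 (Finset.sum_nonpos fun y hy => sub_nonpos.2 ?_)
  obtain ⟨hyu, hy⟩ := Finset.mem_erase.1 hy
  exact hout y ((G.mem_neighborFinset v y).1 hy) hyu

theorem lapl_le_two_sub_degree (hf : IsEdgePotential G u v f) (h : G.Adj u v)
    (hin : ∀ x, G.Adj u x → x ≠ v → 1 ≤ f u - f x) : lapl G f u ≤ 2 - G.degree u := by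
  have := hf.neg.degree_sub_two_le_lapl h.symm fun x hx hxv => by
    rw [Pi.neg_apply, Pi.neg_apply, neg_sub_neg]
    exact hin x hx hxv
  rw [lapl_neg] at this
  linarith

end IsEdgePotential

end Laplacian

section Ricci

variable {G : SimpleGraph V} [G.LocallyFinite] {u v x y : V}

theorem ricci_nonneg_iff :
    0 ≤ ricci G u v ↔ ∀ f, IsEdgePotential G u v f → lapl G f v ≤ lapl G f u :=
  edgeCurvature_nonneg_iff fun _ hf => hf.abs_lapl_le_degree

theorem ricciN_nonneg_iff :
    0 ≤ ricciN G u v ↔ ∀ f, IsEdgePotential G u v f →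
      lapl G f v / G.degree v ≤ lapl G f u / G.degree u := by
  simp only [← laplN_eq_div]
  exact edgeCurvature_nonneg_iff fun _ hf => hf.abs_laplN_le_one

theorem ricci_comm (u v : V) : ricci G u v = ricci G v u :=
  edgeCurvature_comm lapl_neg u v

theorem ricciN_comm (u v : V) : ricciN G u v = ricciN G v u :=
  edgeCurvature_comm laplN_neg u v

theorem ricci_nonneg_iff_ricciN_nonneg_of_degree_eq (h : G.Adj u v)
    (hd : G.degree u = G.degree v) : 0 ≤ ricci G u v ↔ 0 ≤ ricciN G u v := by
  have hpos : (0 : ℝ) < G.degree v := Nat.cast_pos.2 h.degree_pos_right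
  simp only [ricci_nonneg_iff, ricciN_nonneg_iff, hd, div_le_div_iff_of_pos_right hpos]

-- Since `deg u ≤ 2`, every potential has `0 ≤ Δ f u`, so dividing by the degrees favours `u`.
theorem ricciN_nonneg_of_ricci_nonneg (h : G.Adj u v) (hu : G.degree u ≤ 2)
    (huv : G.degree u ≤ G.degree v) (hC : 0 ≤ ricci G u v) : 0 ≤ ricciN G u v := by
  rw [ricci_nonneg_iff] at hC
  rw [ricciN_nonneg_iff]
  intro f hf
  have hnonneg : 0 ≤ lapl G f u :=
    (sub_nonneg.2 (by exact_mod_cast hu)).trans (hf.two_sub_degree_le_lapl h)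
  exact div_le_div₀ hnonneg (hC f hf) (Nat.cast_pos.2 h.degree_pos_left) (Nat.cast_le.2 huv)

theorem ricci_nonneg_of_degree_add_degree_le_four (h : G.Adj u v)
    (hd : G.degree u + G.degree v ≤ 4) : 0 ≤ ricci G u v := by
  rw [ricci_nonneg_iff]
  intro f hf
  have hd' : (G.degree u + G.degree v : ℝ) ≤ 4 := by exact_mod_cast hd
  linarith [hf.two_sub_degree_le_lapl h, hf.lapl_le_degree_sub_two h]

theorem ricci_nonneg_of_degree_add_degree_add_dist_le_seven (h : G.Adj u v)
    (hx : G.Adj u x) (hxv : x ≠ v) (hy : G.Adj v y) (hyu : y ≠ u)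
    (hd : G.degree u + G.degree v + G.dist x y ≤ 7) : 0 ≤ ricci G u v := by
  rw [ricci_nonneg_iff]
  intro f hf
  have hd' : (G.degree u + G.degree v + G.dist x y : ℝ) ≤ 7 := by exact_mod_cast hd
  linarith [hf.three_sub_degree_add_le_lapl h hx hxv, hf.lapl_le_degree_sub_three_add h hy hyu,
    hf.sub_le_dist x y, hf.sub_eq_one]

theorem exists_dist_le_two_of_ricciN_nonneg (hconn : G.Connected) (h : G.Adj u v)
    (hu : G.degree u = 2) (hv : 2 < G.degree v) (hx : G.Adj u x) (hxv : x ≠ v)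
    (hN : 0 ≤ ricciN G u v) : ∃ y, G.Adj v y ∧ y ≠ u ∧ G.dist x y ≤ 2 := by
  by_contra! hfar
  have hxu : G.dist x u = 1 := dist_eq_one_iff_adj.2 hx.symm
  have hdxv : G.dist x v = 2 := by
    obtain ⟨y, hy, hyu⟩ := exists_adj_ne_of_two_le_degree hv.le u
    exact dist_eq_two_of_two_lt_dist hconn hx h hy (hfar y hy hyu)
  have hf : IsEdgePotential G u v (fun w => (G.dist x w : ℝ)) :=
    .of_dist hconn (by rw [hdxv, hxu])
  have hlapl_u : lapl G (fun w => (G.dist x w : ℝ)) u ≤ 0 := by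
    refine (hf.lapl_le_two_sub_degree h fun w hw hwv => ?_).trans_eq (by simp [hu])
    obtain rfl := eq_of_adj_of_ne_of_degree_le_two hu.le h hw hwv hx hxv
    simp [hxu]
  have hlapl_v : 0 < lapl G (fun w => (G.dist x w : ℝ)) v := by
    refine (sub_pos.2 (by exact_mod_cast hv)).trans_le (hf.degree_sub_two_le_lapl h ?_)
    intro y hy hyu
    have hxy : (3 : ℝ) ≤ G.dist x y := by exact_mod_cast hfar y hy hyu
    rw [hdxv, Nat.cast_ofNat]
    linarith
  refine ((ricciN_nonneg_iff.1 hN _ hf).trans ?_).not_gt (div_pos hlapl_v ?_)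
  · exact div_nonpos_of_nonpos_of_nonneg hlapl_u (Nat.cast_nonneg _)
  · exact Nat.cast_pos.2 h.degree_pos_right

theorem nonneg_ricci_combinatorial_iff_normalized_general (hconn : G.Connected) (h : G.Adj u v)
    (hu : G.degree u ≤ 3) (hv : G.degree v ≤ 3) : 0 ≤ ricci G u v ↔ 0 ≤ ricciN G u v := by
  wlog huv : G.degree u ≤ G.degree v generalizing u v
  · rw [ricci_comm, ricciN_comm]
    exact this h.symm hv hu (le_of_not_ge huv)
  have hpos : 0 < G.degree u := h.degree_pos_left
  obtain hd | hd | ⟨hu₂, hv₃⟩ : G.degree u = G.degree v ∨ G.degree u = 1 ∨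
      (G.degree u = 2 ∧ G.degree v = 3) := by lia
  · exact ricci_nonneg_iff_ricciN_nonneg_of_degree_eq h hd
  · have hC := ricci_nonneg_of_degree_add_degree_le_four h (by lia)
    exact iff_of_true hC (ricciN_nonneg_of_ricci_nonneg h (by lia) huv hC)
  · refine ⟨ricciN_nonneg_of_ricci_nonneg h hu₂.le huv, fun hN => ?_⟩
    obtain ⟨x, hx, hxv⟩ := exists_adj_ne_of_two_le_degree hu₂.ge v
    obtain ⟨y, hy, hyu, hxy⟩ :=
      exists_dist_le_two_of_ricciN_nonneg hconn h hu₂ (by lia) hx hxv hN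
    exact ricci_nonneg_of_degree_add_degree_add_dist_le_seven h hx hxv hy hyu (by lia)

end Ricci

/-- For a connected, locally finite simple graph with maximum degree at
most 3 (and at least two vertices), the combinatorial Ricci curvature is nonnegative on
every edge iff the normalized Ricci curvature is nonnegative on every edge. -/
theorem nonneg_ricci_combinatorial_iff_normalized (G : SimpleGraph V) [G.LocallyFinite]
    [Nontrivial V] (hconn : G.Connected) (hdeg : ∀ v : V, G.degree v ≤ 3) :
    (∀ u v : V, G.Adj u v → 0 ≤ ricci G u v) ↔
      (∀ u v : V, G.Adj u v → 0 ≤ ricciN G u v) := by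
  exact forall₃_congr fun u v h =>
    nonneg_ricci_combinatorial_iff_normalized_general hconn h (hdeg u) (hdeg v)
end

section
/- Let G = (V,E) be a finite, connected, 3-regular simple graph with nonnegative Ricci curvature (κ(u,v) ≥ 0 for every edge {u,v}) and diameter at least 6. Then G is isomorphic to a prism graph Y_n = C_n □ K_2 for some n, or to a Möbius ladder M_{2n} for some n. -/
open SimpleGraph

variable {V : Type*}

/-- The prism graph `Y_n = C_n □ K_2`. -/
def prismGraph (n : ℕ) : SimpleGraph (Fin n × Fin 2) :=
  (cycleGraph n).boxProd (⊤ : SimpleGraph (Fin 2))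

/-- The Möbius ladder `M_{2n}`: vertices `ZMod (2n)`, with `i ∼ i+1` and `i ∼ i+n`. -/
def mobiusLadder (n : ℕ) : SimpleGraph (ZMod (2 * n)) :=
  SimpleGraph.fromRel (fun i j => j = i + 1 ∨ j = i + (n : ZMod (2 * n)))

/-!
If the two remaining neighbours of `u` could not be matched with those of `v` at total distance
at most `4`, an explicit test function would make the curvature of the edge `u v` of a cubic
graph negative. Hence every edge lies in short cycles. Along a geodesic of length `6` these are
squares near the middle, and the squares fit together to a ladder with three rungs, which grows
to five rungs: at an end of a ladder, a side that continues to a vertex `p` with `3 ≤ dist p a`,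
where `a` is the third last vertex of that side, forces a new rung at `p`. For a ladder with
five rungs every vertex `p` outside satisfies this, so a ladder of maximal length closes up, and
its two sides return to the two starting vertices either straight or crossed. The resulting
prism or Möbius ladder is cubic, so it is the whole connected graph.
-/

section Distance

variable {G : SimpleGraph V} {u v w : V} {k : ℕ}

theorem succ_le_dist (hconn : G.Connected) (hne : v ≠ w)
    (h : ∀ u, G.Adj v u → k ≤ G.dist u w) : k + 1 ≤ G.dist v w := by
  obtain ⟨p, hp⟩ := hconn.exists_walk_length_eq_dist v w
  cases p with
  | nil => exact absurd rfl hne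
  | cons hadj q =>
    rw [← hp, Walk.length_cons]
    exact Nat.succ_le_succ ((h _ hadj).trans (dist_le q))

theorem dist_le_succ_of_adj (hconn : G.Connected) (huv : G.Adj u v) (w : V) :
    G.dist u w ≤ G.dist v w + 1 := by
  have h := hconn.dist_triangle (u := u) (v := v) (w := w)
  rwa [dist_eq_one_iff_adj.2 huv, add_comm] at h

theorem le_add_dist (hconn : G.Connected) {f : V → ℤ} (hf : ∀ {u v}, G.Adj u v → f u ≤ f v + 1)
    (u v : V) : f u ≤ f v + G.dist u v := by
  obtain ⟨p, hp⟩ := hconn.exists_walk_length_eq_dist u v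
  rw [← hp]
  clear hp
  induction p with
  | nil => simp
  | cons hadj q ih =>
    rw [Walk.length_cons]
    have := hf hadj
    push_cast
    omega

theorem exists_adj_adj_of_dist_eq_two (h : G.dist u v = 2) : ∃ w, G.Adj u w ∧ G.Adj w v := by
  have h' : G.edist u v = 2 := by
    rw [← (Reachable.of_dist_ne_zero (by omega : G.dist u v ≠ 0)).coe_dist_eq_edist, h]
    rfl
  obtain ⟨-, -, w, hw⟩ := edist_eq_two_iff.1 h'
  exact ⟨w, hw.1, hw.2.symm⟩

theorem abs_min_sub_min_le_dist (hconn : G.Connected) (a b : V) (x y : V) :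
    |min ((G.dist x a : ℝ) - 1) (G.dist x b) - min ((G.dist y a : ℝ) - 1) (G.dist y b)| ≤
      G.dist x y := by
  have h (c : V) : |(G.dist x c : ℝ) - G.dist y c| ≤ G.dist x y := by
    have h₁ : (G.dist x c : ℝ) ≤ G.dist x y + G.dist y c := mod_cast hconn.dist_triangle
    have h₂ : (G.dist y c : ℝ) ≤ G.dist y x + G.dist x c := mod_cast hconn.dist_triangle
    rw [dist_comm (u := y) (v := x)] at h₂
    exact abs_le.2 ⟨by linarith, by linarith⟩
  refine (abs_min_sub_min_le_max _ _ _ _).trans (max_le ?_ (h b))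
  simpa using h a

end Distance

section Curvature

variable {G : SimpleGraph V} [G.LocallyFinite] {f : V → ℝ}

theorem abs_lapl_le_degree (hf : ∀ x y, |f x - f y| ≤ (G.dist x y : ℝ)) (x : V) :
    |lapl G f x| ≤ G.degree x := by
  calc |lapl G f x| ≤ ∑ y ∈ G.neighborFinset x, |f y - f x| := Finset.abs_sum_le_sum_abs _ _
    _ ≤ ∑ _ ∈ G.neighborFinset x, (1 : ℝ) := Finset.sum_le_sum fun y hy => by
      have hxy := dist_eq_one_iff_adj.2 ((mem_neighborFinset _ _ _).1 hy).symm
      simpa [hxy] using hf y x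
    _ = G.degree x := by simp

theorem ricci_le_lapl_sub_lapl {u v : V} (hf : ∀ x y, |f x - f y| ≤ (G.dist x y : ℝ))
    (huv : f v - f u = 1) : ricci G u v ≤ lapl G f u - lapl G f v := by
  refine csInf_le ⟨-(G.degree u + G.degree v), ?_⟩ ⟨f, hf, huv, rfl⟩
  rintro r ⟨g, hg, -, rfl⟩
  linarith [abs_le.1 (abs_lapl_le_degree hg u), abs_le.1 (abs_lapl_le_degree hg v)]

end Curvature

/-- The neighbours of `v` are exactly the three distinct vertices `a`, `b`, `c`. -/
structure IsNbrTriple (G : SimpleGraph V) (v a b c : V) : Prop where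
  ne₁₂ : a ≠ b
  ne₁₃ : a ≠ c
  ne₂₃ : b ≠ c
  adj_iff : ∀ w, G.Adj v w ↔ w = a ∨ w = b ∨ w = c

namespace IsNbrTriple

variable {G : SimpleGraph V} {v a b c : V}

theorem rotate (h : IsNbrTriple G v a b c) : IsNbrTriple G v b c a :=
  ⟨h.ne₂₃, h.ne₁₂.symm, h.ne₁₃.symm, fun w => by rw [h.adj_iff]; tauto⟩

theorem swap₂₃ (h : IsNbrTriple G v a b c) : IsNbrTriple G v a c b :=
  ⟨h.ne₁₃, h.ne₁₂, h.ne₂₃.symm, fun w => by rw [h.adj_iff]; tauto⟩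

theorem swap₁₂ (h : IsNbrTriple G v a b c) : IsNbrTriple G v b a c := h.rotate.swap₂₃

theorem adj₁ (h : IsNbrTriple G v a b c) : G.Adj v a := (h.adj_iff a).2 (by simp)

theorem adj₂ (h : IsNbrTriple G v a b c) : G.Adj v b := (h.adj_iff b).2 (by simp)

theorem adj₃ (h : IsNbrTriple G v a b c) : G.Adj v c := (h.adj_iff c).2 (by simp)

theorem eq_or_eq_or_eq (h : IsNbrTriple G v a b c) {w : V} (hw : G.Adj v w) :
    w = a ∨ w = b ∨ w = c := (h.adj_iff w).1 hw

theorem forall_adj (h : IsNbrTriple G v a b c) {P : V → Prop} (ha : P a) (hb : P b) (hc : P c) :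
    ∀ w, G.Adj v w → P w := fun w hw => by
  rcases (h.adj_iff w).1 hw with rfl | rfl | rfl <;> assumption

theorem lapl_eq [G.LocallyFinite] (h : IsNbrTriple G v a b c) (f : V → ℝ) :
    lapl G f v = (f a - f v) + (f b - f v) + (f c - f v) := by
  classical
  have hv : G.neighborFinset v = {a, b, c} := by
    ext w
    simp [h.adj_iff]
  rw [lapl, hv, Finset.sum_insert (by simp [h.ne₁₂, h.ne₁₃]), Finset.sum_pair h.ne₂₃, add_assoc]

end IsNbrTriple

section Regular

variable {G : SimpleGraph V} [G.LocallyFinite] {v a b c : V}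

theorem exists_isNbrTriple (hreg : G.IsRegularOfDegree 3) (ha : G.Adj v a) :
    ∃ b c, IsNbrTriple G v a b c := by
  classical
  obtain ⟨x, y, z, hxy, hxz, hyz, h⟩ := Finset.card_eq_three.1 (hreg v)
  have hv : IsNbrTriple G v x y z := ⟨hxy, hxz, hyz, fun w => by simp [← mem_neighborFinset, h]⟩
  rcases hv.eq_or_eq_or_eq ha with rfl | rfl | rfl
  exacts [⟨_, _, hv⟩, ⟨_, _, hv.rotate⟩, ⟨_, _, hv.rotate.rotate⟩]

theorem exists_isNbrTriple_of_ne (hreg : G.IsRegularOfDegree 3) (ha : G.Adj v a)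
    (hb : G.Adj v b) (hab : a ≠ b) : ∃ c, IsNbrTriple G v a b c := by
  obtain ⟨x, y, h⟩ := exists_isNbrTriple hreg ha
  rcases h.eq_or_eq_or_eq hb with rfl | rfl | rfl
  exacts [absurd rfl hab, ⟨_, h⟩, ⟨_, h.swap₂₃⟩]

theorem isNbrTriple_of_adj (hreg : G.IsRegularOfDegree 3) (ha : G.Adj v a)
    (hb : G.Adj v b) (hc : G.Adj v c) (hab : a ≠ b) (hac : a ≠ c) (hbc : b ≠ c) :
    IsNbrTriple G v a b c := by
  obtain ⟨x, h⟩ := exists_isNbrTriple_of_ne hreg ha hb hab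
  rcases h.eq_or_eq_or_eq hc with rfl | rfl | rfl
  exacts [absurd rfl hac, absurd rfl hbc, h]

end Regular

section Matching

variable {G : SimpleGraph V} [G.LocallyFinite] {u v a b c d : V}

theorem ricci_neg_of_three_le_dist (hconn : G.Connected) (hu : IsNbrTriple G u v a b)
    (hv : IsNbrTriple G v u c d) (hac : 3 ≤ G.dist a c) (had : 3 ≤ G.dist a d)
    (hbc : 2 ≤ G.dist b c) (hbd : 2 ≤ G.dist b d) : ricci G u v < 0 := by
  set f : V → ℝ := fun x => min ((G.dist x a : ℝ) - 1) (G.dist x b) with hf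
  have lip : ∀ x y, |f x - f y| ≤ (G.dist x y : ℝ) := abs_min_sub_min_le_dist hconn a b
  have lip_adj {x y : V} (hxy : G.Adj x y) : f x ≤ f y + 1 := by
    have h := (abs_le.1 (lip x y)).2
    rw [dist_eq_one_iff_adj.2 hxy, Nat.cast_one] at h
    linarith
  have le_f {x : V} {k : ℕ} (hxa : k + 1 ≤ G.dist a x) (hxb : k ≤ G.dist b x) : k ≤ f x := by
    rw [SimpleGraph.dist_comm] at hxa hxb
    exact le_min (le_sub_iff_add_le.2 (mod_cast hxa)) (mod_cast hxb)
  have hfa : f a ≤ -1 := (min_le_left _ _).trans (by simp)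
  have hfb : f b ≤ 0 := (min_le_right _ _).trans (by simp)
  have hfu : f u = 0 := by
    simp [hf, dist_eq_one_iff_adj.2 hu.adj₂, dist_eq_one_iff_adj.2 hu.adj₃]
  have hfc : 2 ≤ f c := le_f hac hbc
  have hfd : 2 ≤ f d := le_f had hbd
  have hfv : f v = 1 := by linarith [lip_adj hv.adj₂.symm, lip_adj hv.adj₁]
  have hle := ricci_le_lapl_sub_lapl lip (u := u) (v := v) (by linarith)
  rw [hu.lapl_eq, hv.lapl_eq] at hle
  linarith

/-- A connected cubic graph in which, across every edge, the two remaining neighbours of one end can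
be matched with those of the other at total distance at most `4`. This is the only consequence of
nonnegative curvature that the classification uses. -/
structure IsMatchedCubic (G : SimpleGraph V) [G.LocallyFinite] : Prop where
  connected : G.Connected
  regular : G.IsRegularOfDegree 3
  matching : ∀ {u v a b c d : V}, IsNbrTriple G u v a b → IsNbrTriple G v u c d →
    G.dist a c + G.dist b d ≤ 4 ∨ G.dist a d + G.dist b c ≤ 4

theorem NonnegRicci.isMatchedCubic (hric : NonnegRicci G) (hconn : G.Connected)
    (hreg : G.IsRegularOfDegree 3) : IsMatchedCubic G := by
  refine ⟨hconn, hreg, fun {u v a b c d} hu hv => ?_⟩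
  by_contra! hfar
  have dist_le_three {x y : V} (hx : G.Adj u x) (hy : G.Adj v y) : G.dist x y ≤ 3 := by
    have h₁ := dist_le_succ_of_adj hconn hx.symm y
    have h₂ := dist_le_succ_of_adj hconn hu.adj₁ y
    have h₃ := dist_eq_one_iff_adj.2 hy
    omega
  have hac := dist_le_three hu.adj₂ hv.adj₂
  have had := dist_le_three hu.adj₂ hv.adj₃
  have hbc := dist_le_three hu.adj₃ hv.adj₂
  have hbd := dist_le_three hu.adj₃ hv.adj₃
  -- Both matchings fail, so one of `a`, `b`, `c`, `d` is at distance `3` from both opposite ones.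
  have hcases : G.dist a c = 3 ∧ G.dist a d = 3 ∨ G.dist b c = 3 ∧ G.dist b d = 3 ∨
      G.dist a c = 3 ∧ G.dist b c = 3 ∨ G.dist a d = 3 ∧ G.dist b d = 3 := by omega
  have hca : G.dist c a = G.dist a c := SimpleGraph.dist_comm
  have hcb : G.dist c b = G.dist b c := SimpleGraph.dist_comm
  have hda : G.dist d a = G.dist a d := SimpleGraph.dist_comm
  have hdb : G.dist d b = G.dist b d := SimpleGraph.dist_comm
  have huv := (hric u v hu.adj₁).not_gt
  have hvu := (hric v u hv.adj₁).not_gt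
  rcases hcases with h | h | h | h
  · exact huv (ricci_neg_of_three_le_dist hconn hu hv
      (by omega) (by omega) (by omega) (by omega))
  · exact huv (ricci_neg_of_three_le_dist hconn hu.swap₂₃ hv
      (by omega) (by omega) (by omega) (by omega))
  · exact hvu (ricci_neg_of_three_le_dist hconn hv hu
      (by omega) (by omega) (by omega) (by omega))
  · exact hvu (ricci_neg_of_three_le_dist hconn hv.swap₂₃ hu
      (by omega) (by omega) (by omega) (by omega))

end Matching

section LadderEnd

variable {G : SimpleGraph V}

/-- `a₁ a₂ a₃` and `b₁ b₂ b₃` are the sides of the last three rungs of a ladder; `p` and `q` are the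
remaining neighbours of its corners `a₃` and `b₃`, and `p` does not lead back to `a₁`. -/
structure IsLadderEnd (G : SimpleGraph V) (a₁ a₂ a₃ b₁ b₂ b₃ p q : V) : Prop where
  nbrs_a₂ : IsNbrTriple G a₂ a₁ a₃ b₂
  nbrs_b₂ : IsNbrTriple G b₂ b₁ b₃ a₂
  nbrs_a₃ : IsNbrTriple G a₃ a₂ b₃ p
  nbrs_b₃ : IsNbrTriple G b₃ b₂ a₃ q
  adj : G.Adj a₁ b₁
  three_le_dist : 3 ≤ G.dist p a₁

namespace IsLadderEnd

variable {a₁ a₂ a₃ b₁ b₂ b₃ p q : V}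

theorem not_adj_of_adj_a₁ (h : IsLadderEnd G a₁ a₂ a₃ b₁ b₂ b₃ p q) {c : V} (hc : G.Adj c a₁) :
    ¬ G.Adj p c := fun hpc => by
  have := h.three_le_dist
  have := dist_le (.cons hpc (.cons hc .nil))
  simp only [Walk.length_cons, Walk.length_nil] at this
  omega

theorem not_adj_b₂ (h : IsLadderEnd G a₁ a₂ a₃ b₁ b₂ b₃ p q) : ¬ G.Adj p b₂ := fun hp => by
  rcases h.nbrs_b₂.eq_or_eq_or_eq hp.symm with rfl | rfl | rfl
  · have := h.three_le_dist
    rw [dist_eq_one_iff_adj.2 h.adj.symm] at this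
    omega
  · exact h.nbrs_a₃.ne₂₃ rfl
  · exact h.nbrs_a₃.ne₁₃ rfl

theorem three_le_dist_of_adj (hconn : G.Connected) (h : IsLadderEnd G a₁ a₂ a₃ b₁ b₂ b₃ p q)
    {c : V} (hc : G.Adj p c) (hca₃ : c ≠ a₃) (hcb₃ : c ≠ b₃) : 3 ≤ G.dist a₂ c := by
  have hca₂ : c ≠ a₂ := by
    rintro rfl
    exact h.not_adj_of_adj_a₁ h.nbrs_a₂.adj₁ hc
  have hcb₁ : c ≠ b₁ := by
    rintro rfl
    exact h.not_adj_of_adj_a₁ h.adj.symm hc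
  have hcb₂ : c ≠ b₂ := by
    rintro rfl
    exact h.not_adj_b₂ hc
  refine succ_le_dist hconn hca₂.symm (h.nbrs_a₂.forall_adj ?_ ?_ ?_)
  · have h₁ := h.three_le_dist
    have h₂ := dist_le_succ_of_adj hconn hc a₁
    rw [SimpleGraph.dist_comm]
    omega
  · refine hconn.one_lt_dist_of_ne_of_not_adj hca₃.symm fun hadj => ?_
    rcases h.nbrs_a₃.eq_or_eq_or_eq hadj with e | e | rfl
    exacts [hca₂ e, hcb₃ e, hc.ne rfl]
  · refine hconn.one_lt_dist_of_ne_of_not_adj hcb₂.symm fun hadj => ?_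
    rcases h.nbrs_b₂.eq_or_eq_or_eq hadj with e | e | e
    exacts [hcb₁ e, hcb₃ e, hca₂ e]

theorem le_dist_of_adj_of_adj (hconn : G.Connected) (h : IsLadderEnd G a₁ a₂ a₃ b₁ b₂ b₃ p p)
    {z c : V} (hp : IsNbrTriple G p a₃ b₃ z) (hzc : G.Adj z c) (hcp : c ≠ p) :
    3 ≤ G.dist a₃ c ∧ 2 ≤ G.dist b₃ c := by
  have ha₂z : 3 ≤ G.dist a₂ z :=
    h.three_le_dist_of_adj hconn hp.adj₃ hp.ne₁₃.symm hp.ne₂₃.symm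
  have ha₂c : 2 ≤ G.dist a₂ c := by
    have := dist_le_succ_of_adj hconn hzc a₂
    rw [SimpleGraph.dist_comm (u := z), SimpleGraph.dist_comm (u := c)] at this
    omega
  have ha₂a₃ := dist_eq_one_iff_adj.2 h.nbrs_a₂.adj₂
  have ha₂b₂ := dist_eq_one_iff_adj.2 h.nbrs_a₂.adj₃
  have hca₃ : c ≠ a₃ := by
    rintro rfl
    omega
  have hb₃c : 2 ≤ G.dist b₃ c := by
    refine hconn.one_lt_dist_of_ne_of_not_adj ?_ fun hadj => ?_
    · rintro rfl
      rcases h.nbrs_b₃.eq_or_eq_or_eq hzc.symm with rfl | rfl | rfl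
      exacts [by omega, hp.ne₁₃ rfl, hp.adj₃.ne rfl]
    · rcases h.nbrs_b₃.eq_or_eq_or_eq hadj with rfl | e | e
      exacts [by omega, hca₃ e, hcp e]
  refine ⟨succ_le_dist hconn hca₃.symm (h.nbrs_a₃.forall_adj ha₂c hb₃c ?_), hb₃c⟩
  refine hconn.one_lt_dist_of_ne_of_not_adj hcp.symm fun hadj => ?_
  rcases hp.eq_or_eq_or_eq hadj with rfl | rfl | rfl
  exacts [hca₃ rfl, by simp at hb₃c, hzc.ne rfl]

variable [G.LocallyFinite]

theorem p_ne_q (hG : IsMatchedCubic G) (h : IsLadderEnd G a₁ a₂ a₃ b₁ b₂ b₃ p q) : p ≠ q := by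
  rintro rfl
  obtain ⟨z, hp⟩ := exists_isNbrTriple_of_ne hG.regular h.nbrs_a₃.adj₃.symm h.nbrs_b₃.adj₃.symm
    h.nbrs_a₃.adj₂.ne
  obtain ⟨c, d, hz⟩ := exists_isNbrTriple hG.regular hp.adj₃.symm
  have hc := h.le_dist_of_adj_of_adj hG.connected hp hz.adj₂ hz.ne₁₂.symm
  have hd := h.le_dist_of_adj_of_adj hG.connected hp hz.adj₃ hz.ne₁₃.symm
  have := hG.matching hp.rotate.rotate hz
  omega

theorem adj_p_q (hG : IsMatchedCubic G) (h : IsLadderEnd G a₁ a₂ a₃ b₁ b₂ b₃ p q) :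
    G.Adj p q := by
  by_contra hpq
  have hpb₃ : ¬ G.Adj p b₃ := fun hadj => by
    rcases h.nbrs_b₃.eq_or_eq_or_eq hadj.symm with rfl | rfl | e
    exacts [h.not_adj_of_adj_a₁ h.adj.symm h.nbrs_b₂.adj₁, h.nbrs_a₃.adj₃.ne rfl, h.p_ne_q hG e]
  have far {c : V} (hpc : G.Adj p c) (hca₃ : c ≠ a₃) : 3 ≤ G.dist a₂ c ∧ 2 ≤ G.dist b₃ c := by
    have hcb₃ : c ≠ b₃ := by
      rintro rfl
      exact hpb₃ hpc
    refine ⟨h.three_le_dist_of_adj hG.connected hpc hca₃ hcb₃,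
      hG.connected.one_lt_dist_of_ne_of_not_adj hcb₃.symm fun hadj => ?_⟩
    rcases h.nbrs_b₃.eq_or_eq_or_eq hadj with rfl | e | rfl
    exacts [h.not_adj_b₂ hpc, hca₃ e, hpq hpc]
  obtain ⟨c, d, hp⟩ := exists_isNbrTriple hG.regular h.nbrs_a₃.adj₃.symm
  have hc := far hp.adj₂ hp.ne₁₂.symm
  have hd := far hp.adj₃ hp.ne₁₃.symm
  have := hG.matching h.nbrs_a₃.rotate.rotate hp
  omega

end IsLadderEnd

end LadderEnd

/-- The rows `z 0` and `z 1`, restricted to indices at most `k`, form a ladder with `k + 1` rungs.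
The values `z s i` with `k < i` are junk. -/
structure IsLadder (G : SimpleGraph V) (k : ℕ) (z : Fin 2 → ℕ → V) : Prop where
  adj_succ : ∀ (s : Fin 2) {i : ℕ}, i < k → G.Adj (z s i) (z s (i + 1))
  adj_rung : ∀ {s t : Fin 2} {i : ℕ}, s ≠ t → i ≤ k → G.Adj (z s i) (z t i)
  inj : ∀ {s t : Fin 2} {i j : ℕ}, i ≤ k → j ≤ k → z s i = z t j → s = t ∧ i = j

/-- The vertices of the ladder with rows `z 0`, `z 1` and `k + 1` rungs. -/
def ladderVerts (k : ℕ) (z : Fin 2 → ℕ → V) : Set V := {v | ∃ s, ∃ i ≤ k, z s i = v}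

theorem eq_or_eq_of_ne {s t : Fin 2} (hst : s ≠ t) (r : Fin 2) : r = s ∨ r = t := by
  revert s t r
  decide

namespace IsLadder

variable {G : SimpleGraph V} {k m : ℕ} {z : Fin 2 → ℕ → V} {r s t : Fin 2} {i j : ℕ} {p q : V}

theorem reverse (h : IsLadder G k z) : IsLadder G k fun s i => z s (k - i) where
  adj_succ s i hi := by
    have := h.adj_succ s (i := k - (i + 1)) (by omega)
    rw [show k - (i + 1) + 1 = k - i by omega] at this
    exact this.symm
  adj_rung hst hi := h.adj_rung hst (by omega)
  inj hi hj e := by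
    obtain ⟨hst, hij⟩ := h.inj (by omega) (by omega) e
    exact ⟨hst, by omega⟩

theorem card_le [Fintype V] (h : IsLadder G k z) : k + 1 ≤ Fintype.card V := by
  have hinj : Function.Injective fun i : Fin (k + 1) => z 0 i := fun i j e =>
    Fin.ext (h.inj (by omega) (by omega) e).2
  simpa using Fintype.card_le_of_injective _ hinj

theorem snoc (h : IsLadder G k z) {p : Fin 2 → V} (hadj : ∀ s, G.Adj (z s k) (p s))
    (hrung : ∀ {s t}, s ≠ t → G.Adj (p s) (p t)) (hp : ∀ s, p s ∉ ladderVerts k z) :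
    IsLadder G (k + 1) fun s i => if i ≤ k then z s i else p s where
  adj_succ s i hi := by
    rcases (Nat.lt_succ_iff.1 hi).lt_or_eq with hi | rfl
    · simpa [hi.le, Nat.succ_le_of_lt hi] using h.adj_succ s hi
    · simpa using hadj s
  adj_rung {s t i} hst _ := by
    split_ifs with hik
    exacts [h.adj_rung hst hik, hrung hst]
  inj {s t i j} hi hj e := by
    split_ifs at e with hik hjk hjk
    · exact h.inj hik hjk e
    · exact absurd ⟨s, i, hik, e⟩ (hp t)
    · exact absurd ⟨t, j, hjk, e.symm⟩ (hp s)
    · refine ⟨by_contra fun hst => (hrung hst).ne e, by omega⟩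

theorem exists_maximal [Finite V] (h : IsLadder G m z) :
    ∃ k z, m ≤ k ∧ IsLadder G k z ∧ ∀ z', ¬ IsLadder G (k + 1) z' := by
  by_contra! hext
  have hall : ∀ k ≥ m, ∃ z, IsLadder G k z := fun k hk => by
    induction k, hk using Nat.le_induction with
    | base => exact ⟨z, h⟩
    | succ k hk ih => exact hext k _ hk ih.choose_spec
  have := Fintype.ofFinite V
  obtain ⟨z', hz'⟩ := hall (m + Fintype.card V) (by omega)
  have := hz'.card_le
  omega

theorem ne_of_lt (h : IsLadder G k z) (hik : i < k) : z s k ≠ z r i := fun e => by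
  have := (h.inj le_rfl hik.le e).2
  omega

section Regular

variable [G.LocallyFinite]

theorem isNbrTriple (h : IsLadder G k z) (hreg : G.IsRegularOfDegree 3) (hst : s ≠ t)
    (hi : i + 1 < k) : IsNbrTriple G (z s (i + 1)) (z s i) (z s (i + 2)) (z t (i + 1)) :=
  isNbrTriple_of_adj hreg (h.adj_succ s (by omega)).symm (h.adj_succ s hi)
    (h.adj_rung hst (by omega))
    (fun e => by have := (h.inj (by omega) (by omega) e).2; omega)
    (fun e => hst (h.inj (by omega) (by omega) e).1)
    (fun e => hst (h.inj (by omega) (by omega) e).1)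

theorem exists_isNbrTriple_end (h : IsLadder G (k + 1) z) (hreg : G.IsRegularOfDegree 3)
    (hst : s ≠ t) : ∃ p, IsNbrTriple G (z s (k + 1)) (z s k) (z t (k + 1)) p :=
  exists_isNbrTriple_of_ne hreg (h.adj_succ s k.lt_succ_self).symm (h.adj_rung hst le_rfl)
    fun e => hst (h.inj (by omega) le_rfl e).1

theorem mem_of_adj (h : IsLadder G k z) (hreg : G.IsRegularOfDegree 3) (hi₀ : 0 < i)
    (hik : i < k) (hp : G.Adj (z s i) p) : p ∈ ladderVerts k z := by
  obtain ⟨t, hst⟩ := exists_ne s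
  obtain ⟨i, rfl⟩ := Nat.exists_eq_add_of_lt hi₀
  rw [Nat.zero_add] at hp hik
  rcases (h.isNbrTriple hreg hst.symm hik).eq_or_eq_or_eq hp with rfl | rfl | rfl
  exacts [⟨s, i, by omega, rfl⟩, ⟨s, i + 2, by omega, rfl⟩, ⟨t, i + 1, by omega, rfl⟩]

theorem eq_of_adj_start (h : IsLadder G k z) (hreg : G.IsRegularOfDegree 3) (hk : 0 < k)
    (hst : s ≠ t) (hp : G.Adj p (z s 0)) (hq : G.Adj q (z s 0)) (hp₁ : p ≠ z s 1)
    (hp₀ : p ≠ z t 0) (hq₁ : q ≠ z s 1) (hq₀ : q ≠ z t 0) : p = q := by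
  obtain ⟨c, hc⟩ := exists_isNbrTriple_of_ne hreg (h.adj_succ s hk) (h.adj_rung hst k.zero_le)
    fun e => hst (h.inj (by omega) (by omega) e).1
  have eq_c {w : V} (hw : G.Adj w (z s 0)) (hw₁ : w ≠ z s 1) (hw₀ : w ≠ z t 0) : w = c := by
    have := hc.eq_or_eq_or_eq hw.symm
    tauto
  rw [eq_c hp hp₁ hp₀, eq_c hq hq₁ hq₀]

theorem eq_of_adj_end (h : IsLadder G k z) (hreg : G.IsRegularOfDegree 3) (hi : i ≤ k)
    (hadj : G.Adj (z s k) (z r i)) : i = 0 ∨ r = s ∧ i + 1 = k ∨ r ≠ s ∧ i = k := by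
  by_contra! hne
  obtain ⟨hi₀, hpred, hend⟩ := hne
  have hik : i < k := by
    refine lt_of_le_of_ne hi fun hik => ?_
    by_cases hrs : r = s
    · subst hrs hik
      exact hadj.ne rfl
    · exact hend hrs hik
  obtain ⟨t, ht⟩ := exists_ne r
  obtain ⟨i, rfl⟩ := Nat.exists_eq_succ_of_ne_zero hi₀
  rcases (h.isNbrTriple hreg ht.symm hik).eq_or_eq_or_eq hadj.symm with e | e | e
  · have := (h.inj le_rfl (by omega) e).2
    omega
  · obtain ⟨rfl, hk⟩ := h.inj le_rfl (by omega) e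
    exact hpred rfl hk.symm
  · have := (h.inj le_rfl (by omega) e).2
    omega

theorem le_dist_of_notMem (h : IsLadder G k z) (hconn : G.Connected)
    (hreg : G.IsRegularOfDegree 3) (hp : p ∉ ladderVerts k z) {d : ℕ} (hdi : d ≤ i)
    (hik : i + d ≤ k) : d + 1 ≤ G.dist (z s i) p := by
  have hne : z s i ≠ p := fun e => hp ⟨s, i, by omega, e⟩
  induction d generalizing s i with
  | zero => exact hconn.pos_dist_of_ne hne
  | succ d ih =>
    obtain ⟨t, hst⟩ := exists_ne s
    obtain ⟨i, rfl⟩ := Nat.exists_eq_add_of_le' hdi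
    have inner (r : Fin 2) {j : ℕ} (hdj : d ≤ j) (hjk : j + d ≤ k) : d + 1 ≤ G.dist (z r j) p :=
      ih hdj hjk fun e => hp ⟨r, j, by omega, e⟩
    exact succ_le_dist hconn hne ((h.isNbrTriple hreg hst.symm (i := i + d) (by omega)).forall_adj
      (inner s (by omega) (by omega)) (inner s (by omega) (by omega))
      (inner t (by omega) (by omega)))

theorem isLadderEnd (h : IsLadder G (m + 2) z) (hreg : G.IsRegularOfDegree 3) (hst : s ≠ t)
    (hp : IsNbrTriple G (z s (m + 2)) (z s (m + 1)) (z t (m + 2)) p)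
    (hq : IsNbrTriple G (z t (m + 2)) (z t (m + 1)) (z s (m + 2)) q)
    (hdist : 3 ≤ G.dist p (z s m)) :
    IsLadderEnd G (z s m) (z s (m + 1)) (z s (m + 2)) (z t m) (z t (m + 1)) (z t (m + 2)) p q where
  nbrs_a₂ := h.isNbrTriple hreg hst (by omega)
  nbrs_b₂ := h.isNbrTriple hreg hst.symm (by omega)
  nbrs_a₃ := hp
  nbrs_b₃ := hq
  adj := h.adj_rung hst (by omega)
  three_le_dist := hdist

theorem notMem_of_adj_notMem (h : IsLadder G (m + 2) z) (hreg : G.IsRegularOfDegree 3)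
    (hst : s ≠ t) (hq : IsNbrTriple G (z t (m + 2)) (z t (m + 1)) (z s (m + 2)) q)
    (hp : p ∉ ladderVerts (m + 2) z) (hpq : G.Adj p q) : q ∉ ladderVerts (m + 2) z := by
  rintro ⟨r, i, hi, rfl⟩
  obtain rfl | hi₀ := i.eq_zero_or_pos
  · obtain ⟨r', hr⟩ := exists_ne r
    have hp_ne (r : Fin 2) (i : ℕ) (hi : i ≤ m + 2) : p ≠ z r i := fun e => hp ⟨r, i, hi, e.symm⟩
    exact hp_ne t (m + 2) le_rfl <| h.eq_of_adj_start hreg (by omega) hr.symm hpq hq.adj₃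
      (hp_ne _ _ (by omega)) (hp_ne _ _ (by omega)) (h.ne_of_lt (by omega)) (h.ne_of_lt (by omega))
  obtain hi | rfl := hi.lt_or_eq
  · exact hp (h.mem_of_adj hreg hi₀ hi hpq.symm)
  · rcases eq_or_eq_of_ne hst r with rfl | rfl
    exacts [hq.ne₂₃ rfl, hq.adj₃.ne rfl]

theorem exists_extension (h : IsLadder G (m + 2) z) (hG : IsMatchedCubic G)
    (hps : G.Adj (z s (m + 2)) p) (hp : p ∉ ladderVerts (m + 2) z) (hdist : 3 ≤ G.dist p (z s m)) :
    ∃ z', IsLadder G (m + 3) z' ∧ (∀ r, ∀ i ≤ m + 2, z' r i = z r i) ∧ z' s (m + 3) = p := by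
  obtain ⟨t, hts⟩ := exists_ne s
  obtain ⟨c, hc⟩ := h.exists_isNbrTriple_end hG.regular hts.symm
  obtain ⟨q, hq⟩ := h.exists_isNbrTriple_end hG.regular hts
  obtain rfl : p = c := by
    rcases hc.eq_or_eq_or_eq hps with rfl | rfl | rfl
    exacts [absurd ⟨s, m + 1, by omega, rfl⟩ hp, absurd ⟨t, m + 2, le_rfl, rfl⟩ hp, rfl]
  have hpq : G.Adj p q := (h.isLadderEnd hG.regular hts.symm hc hq hdist).adj_p_q hG
  have hq' := h.notMem_of_adj_notMem hG.regular hts.symm hq hp hpq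
  let e (r : Fin 2) : V := if r = s then p else q
  have hes : e s = p := if_pos rfl
  have het : e t = q := if_neg hts
  refine ⟨_, h.snoc (p := e) ?_ ?_ ?_, fun r i hi => if_pos hi, by simpa using hes⟩
  · intro r
    rcases eq_or_eq_of_ne hts r with rfl | rfl
    exacts [het ▸ hq.adj₃, hes ▸ hps]
  · intro r r' hr
    rcases eq_or_eq_of_ne hts r with rfl | rfl <;> rcases eq_or_eq_of_ne hts r' with rfl | rfl
    exacts [absurd rfl hr, by simpa only [hes, het] using hpq.symm,
      by simpa only [hes, het] using hpq, absurd rfl hr]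
  · intro r
    rcases eq_or_eq_of_ne hts r with rfl | rfl
    exacts [het ▸ hq', hes ▸ hp]

theorem exists_extension_of_level (h : IsLadder G (m + 2) z) (hG : IsMatchedCubic G) {f : V → ℤ}
    (hf : ∀ {u v}, G.Adj u v → f u ≤ f v + 1) {c : ℤ} (hlevel : ∀ i ≤ m + 2, f (z s i) = c + i)
    (hps : G.Adj (z s (m + 2)) p) (hfp : f p = c + (m + 3)) (hp : ∀ t ≠ s, p ≠ z t (m + 2)) :
    ∃ z', IsLadder G (m + 3) z' ∧ (∀ r, ∀ i ≤ m + 2, z' r i = z r i) ∧ z' s (m + 3) = p := by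
  refine h.exists_extension hG hps ?_ ?_
  · rintro ⟨t, i, hi, rfl⟩
    have hzi := hlevel i hi
    rcases eq_or_ne t s with rfl | hts
    · omega
    · have := hf (h.adj_rung hts hi)
      obtain rfl : i = m + 2 := by omega
      exact hp t hts rfl
  · have h₁ := le_add_dist hG.connected hf p (z s m)
    have h₂ := hlevel m (by omega)
    omega

theorem exists_extension_of_notMem (h : IsLadder G k z) (hG : IsMatchedCubic G) (hk : 4 ≤ k)
    (hps : G.Adj (z s k) p) (hp : p ∉ ladderVerts k z) : ∃ z', IsLadder G (k + 1) z' := by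
  obtain ⟨m, rfl⟩ := Nat.exists_eq_add_of_le' (show 2 ≤ k by omega)
  have hdist := h.le_dist_of_notMem hG.connected hG.regular hp (s := s) (i := m) (d := 2)
    (by omega) (by omega)
  obtain ⟨z', hz', -⟩ := h.exists_extension hG hps hp (by rwa [SimpleGraph.dist_comm])
  exact ⟨z', hz'⟩

theorem exists_closed_of_maximal (h : IsLadder G k z) (hG : IsMatchedCubic G) (hk : 4 ≤ k)
    (hmax : ∀ z', ¬ IsLadder G (k + 1) z') : ∃ τ, ∀ s, G.Adj (z s k) (z (s + τ) 0) := by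
  have hstart : ∀ s, ∃ r, G.Adj (z s k) (z r 0) := fun s => by
    obtain ⟨l, rfl⟩ := Nat.exists_eq_add_of_le' (show 1 ≤ k by omega)
    obtain ⟨t, hst⟩ := exists_ne s
    obtain ⟨p, hp⟩ := h.exists_isNbrTriple_end hG.regular hst.symm
    obtain ⟨r, i, hi, rfl⟩ : p ∈ ladderVerts (l + 1) z := by
      by_contra hp'
      obtain ⟨z', hz'⟩ := h.exists_extension_of_notMem hG hk hp.adj₃ hp'
      exact hmax z' hz'
    rcases h.eq_of_adj_end hG.regular hi hp.adj₃ with rfl | ⟨rfl, hil⟩ | ⟨hrs, rfl⟩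
    · exact ⟨r, hp.adj₃⟩
    · obtain rfl : i = l := by omega
      exact absurd rfl hp.ne₁₃
    · obtain rfl := (eq_or_eq_of_ne hst r).resolve_right hrs
      exact absurd rfl hp.ne₂₃
  choose ρ hρ using hstart
  have hρ_ne : ρ 0 ≠ ρ 1 := fun e => by
    obtain ⟨r, hr⟩ := exists_ne (ρ 0)
    have hz : z 0 k = z 1 k := h.eq_of_adj_start hG.regular (by omega) hr.symm (hρ 0) (e ▸ hρ 1)
      (h.ne_of_lt (by omega)) (h.ne_of_lt (by omega)) (h.ne_of_lt (by omega))
      (h.ne_of_lt (by omega))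
    exact absurd (h.inj le_rfl le_rfl hz).1 zero_ne_one
  have hτ : ρ 0 = 0 + ρ 0 ∧ ρ 1 = 1 + ρ 0 := by
    revert hρ_ne
    generalize ρ 0 = a
    generalize ρ 1 = b
    revert a b
    decide
  exact ⟨ρ 0, Fin.forall_fin_two.2 ⟨hτ.1 ▸ hρ 0, hτ.2 ▸ hρ 1⟩⟩

end Regular

end IsLadder

/-- The rows `a₀, a₁, a₂` and `b₀, b₁, b₂` of a ladder with three rungs, each continued with its
last entry as junk value. -/
def threeRungs (a₀ a₁ a₂ b₀ b₁ b₂ : V) : Fin 2 → ℕ → V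
  | 0, 0 => a₀
  | 0, 1 => a₁
  | 0, _ => a₂
  | 1, 0 => b₀
  | 1, 1 => b₁
  | 1, _ => b₂

theorem isLadder_threeRungs {G : SimpleGraph V} {a₀ a₁ a₂ b₀ b₁ b₂ : V}
    (hnodup : [a₀, a₁, a₂, b₀, b₁, b₂].Nodup) (ha₀ : G.Adj a₀ a₁) (ha₁ : G.Adj a₁ a₂)
    (hb₀ : G.Adj b₀ b₁) (hb₁ : G.Adj b₁ b₂) (h₀ : G.Adj a₀ b₀) (h₁ : G.Adj a₁ b₁)
    (h₂ : G.Adj a₂ b₂) : IsLadder G 2 (threeRungs a₀ a₁ a₂ b₀ b₁ b₂) where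
  adj_succ s i hi := by
    interval_cases i <;> fin_cases s
    exacts [ha₀, hb₀, ha₁, hb₁]
  adj_rung {s t i} hst hi := by
    interval_cases i <;> fin_cases s <;> fin_cases t <;> simp_all [threeRungs, adj_comm]
  inj {s t i j} hi hj e := by
    interval_cases i <;> interval_cases j <;> fin_cases s <;> fin_cases t <;>
      simp_all [threeRungs]

theorem IsMatchedCubic.segment_cases {G : SimpleGraph V} [G.LocallyFinite] (hG : IsMatchedCubic G)
    {u v a b c d : V} (hu : IsNbrTriple G u v a c) (hv : IsNbrTriple G v u b d)
    (hab : 3 ≤ G.dist a b) :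
    c = d ∨ G.Adj c d ∨ G.Adj a d ∨ G.Adj c b ∨
      (∃ z, G.Adj a z ∧ G.Adj z d) ∧ ∃ z, G.Adj c z ∧ G.Adj z b := by
  have eq_or_adj {x y : V} (hxy : G.dist x y ≤ 1) : x = y ∨ G.Adj x y := by
    by_contra! h
    exact (hG.connected.one_lt_dist_of_ne_of_not_adj h.1 h.2).not_ge hxy
  have had : a ≠ d := by
    rintro rfl
    have := dist_le (.cons hv.adj₃.symm (.cons hv.adj₂ .nil))
    simp only [Walk.length_cons, Walk.length_nil] at this
    omega
  have hcb : c ≠ b := by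
    rintro rfl
    have := dist_le (.cons hu.adj₂.symm (.cons hu.adj₃ .nil))
    simp only [Walk.length_cons, Walk.length_nil] at this
    omega
  rcases hG.matching hu hv with h | h
  · rcases eq_or_adj (x := c) (y := d) (by omega) with hcd | hcd <;> simp [hcd]
  · obtain had₁ | hcb₁ | ⟨had₂, hcb₂⟩ : G.dist a d ≤ 1 ∨ G.dist c b ≤ 1 ∨
        G.dist a d = 2 ∧ G.dist c b = 2 := by omega
    · simp [(eq_or_adj had₁).resolve_left had]
    · simp [(eq_or_adj hcb₁).resolve_left hcb]
    · simp [exists_adj_adj_of_dist_eq_two had₂, exists_adj_adj_of_dist_eq_two hcb₂]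

/-- A path `x 0, …, x 6` along which the `1`-Lipschitz function `f` takes the values `0, …, 6`, with
`y i` the neighbour of the inner vertex `x i` off the path. -/
structure IsLevelPath (G : SimpleGraph V) (f : V → ℤ) (x y : ℕ → V) : Prop where
  lip : ∀ {u v : V}, G.Adj u v → f u ≤ f v + 1
  level : ∀ {i : ℕ}, i ≤ 6 → f (x i) = i
  nbrs : ∀ {i : ℕ}, i < 5 → IsNbrTriple G (x (i + 1)) (x i) (x (i + 2)) (y (i + 1))

namespace IsLevelPath

variable {G : SimpleGraph V} {f : V → ℤ} {x y : ℕ → V}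

theorem reverse (h : IsLevelPath G f x y) :
    IsLevelPath G (fun v => 6 - f v) (fun i => x (6 - i)) (fun i => y (6 - i)) where
  lip huv := by linarith [h.lip huv.symm]
  level {i} hi := by
    rw [h.level (by omega)]
    omega
  nbrs {i} hi := by
    have hn := h.nbrs (i := 4 - i) (by omega)
    rw [show 4 - i + 1 = 6 - (i + 1) by omega, show 4 - i + 2 = 6 - i by omega,
      show 4 - i = 6 - (i + 2) by omega] at hn
    exact hn.swap₁₂

theorem levels (h : IsLevelPath G f x y) : f (x 0) = 0 ∧ f (x 1) = 1 ∧ f (x 2) = 2 ∧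
    f (x 3) = 3 ∧ f (x 4) = 4 ∧ f (x 5) = 5 ∧ f (x 6) = 6 := by
  refine ⟨?_, ?_, ?_, ?_, ?_, ?_, ?_⟩ <;> exact h.level (by omega)

theorem le_level_y (h : IsLevelPath G f x y) {i : ℕ} (hi : i < 5) : i ≤ f (y (i + 1)) := by
  have := h.lip (h.nbrs hi).adj₃
  rw [h.level (by omega)] at this
  push_cast at this
  omega

theorem level_y_le (h : IsLevelPath G f x y) {i : ℕ} (hi : i < 5) : f (y (i + 1)) ≤ i + 2 := by
  have := h.lip (h.nbrs hi).adj₃.symm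
  rw [h.level (by omega)] at this
  push_cast at this
  omega

variable [G.LocallyFinite]

theorem edge_cases (h : IsLevelPath G f x y) (hG : IsMatchedCubic G) {i : ℕ} (hi : i ≤ 3) :
    y (i + 1) = y (i + 2) ∨ G.Adj (y (i + 1)) (y (i + 2)) ∨ G.Adj (x i) (y (i + 2)) ∨
      G.Adj (y (i + 1)) (x (i + 3)) ∨ (∃ z, G.Adj (x i) z ∧ G.Adj z (y (i + 2))) ∧
        ∃ z, G.Adj (y (i + 1)) z ∧ G.Adj z (x (i + 3)) := by
  refine hG.segment_cases (h.nbrs (i := i) (by omega)).swap₁₂ (h.nbrs (i := i + 1) (by omega)) ?_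
  have hdist := le_add_dist hG.connected h.lip (x (i + 3)) (x i)
  rw [h.level (by omega), h.level (by omega), SimpleGraph.dist_comm] at hdist
  omega

theorem level_le_of_triangle (h : IsLevelPath G f x y) (hG : IsMatchedCubic G) {i : ℕ}
    (hi : i ≤ 1) {w : V} (ht : IsNbrTriple G (y (i + 2)) (x (i + 2)) (x (i + 3)) w) :
    f w ≤ i + 2 := by
  have l₀ := h.level (i := i) (by omega)
  have l₁ := h.level (i := i + 1) (by omega)
  have l₂ := h.level (i := i + 2) (by omega)
  have l₃ := h.level (i := i + 3) (by omega)
  have l₄ := h.level (i := i + 4) (by omega)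
  have ly₁ := h.level_y_le (i := i) (by omega)
  have n₁ := h.nbrs (i := i) (by omega)
  have n₃ : IsNbrTriple G (x (i + 3)) (x (i + 2)) (x (i + 4)) (y (i + 3)) := h.nbrs (by omega)
  push_cast at l₁ l₂ l₃ l₄
  have le_of_adj {v : V} (hv : G.Adj (y (i + 2)) v) (hvx : v ≠ x (i + 2)) (hfv : f v ≤ i + 2) :
      f w ≤ i + 2 := by
    rcases ht.eq_or_eq_or_eq hv with rfl | rfl | rfl
    exacts [absurd rfl hvx, by omega, hfv]
  have le_of_eq (e : y (i + 1) = y (i + 2)) : f w ≤ i + 2 :=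
    le_of_adj (e ▸ n₁.adj₃.symm) (ne_of_apply_ne f (by omega)) (by omega)
  rcases h.edge_cases hG (i := i) (by omega) with e | e | e | e | ⟨⟨z, hz₁, hz₂⟩, -⟩
  · exact le_of_eq e
  · exact le_of_adj e.symm n₁.ne₂₃.symm ly₁
  · exact le_of_adj e.symm (ne_of_apply_ne f (by omega)) (by omega)
  · have hy₃ : y (i + 2) = y (i + 3) := by
      have := h.lip ht.adj₁
      rcases n₃.eq_or_eq_or_eq ht.adj₂.symm with e | e | e
      exacts [absurd e ht.adj₁.ne, absurd (congrArg f e) (by omega), e]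
    rcases n₃.eq_or_eq_or_eq e.symm with e | e | e
    exacts [absurd e.symm n₁.ne₂₃, absurd (congrArg f e) (by omega), le_of_eq (e.trans hy₃.symm)]
  · have := h.lip hz₁.symm
    exact le_of_adj hz₂.symm (ne_of_apply_ne f (by omega)) (by omega)

theorem y₂_ne_y₃ (h : IsLevelPath G f x y) (hG : IsMatchedCubic G) : y 2 ≠ y 3 := fun e => by
  obtain ⟨-, -, l₂, l₃, -⟩ := h.levels
  obtain ⟨w, hw⟩ := exists_isNbrTriple_of_ne hG.regular (h.nbrs (i := 1) (by omega)).adj₃.symm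
    (e ▸ (h.nbrs (i := 2) (by omega)).adj₃.symm) (ne_of_apply_ne f (by simp [l₂, l₃]))
  have hle := h.level_le_of_triangle hG zero_le_one hw
  have hge := h.reverse.level_le_of_triangle hG le_rfl (w := w) (by simpa [e] using hw.swap₁₂)
  simp only [Nat.cast_zero, Nat.cast_one] at hle hge
  omega

theorem y₃_ne_y₄ (h : IsLevelPath G f x y) (hG : IsMatchedCubic G) : y 3 ≠ y 4 :=
  (h.reverse.y₂_ne_y₃ hG).symm

theorem middle_edge_cases (h : IsLevelPath G f x y) (hG : IsMatchedCubic G) :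
    G.Adj (y 2) (y 3) ∨ y 1 = y 3 ∨ y 2 = y 4 ∨ G.Adj (y 1) (y 3) ∧ G.Adj (y 2) (y 4) := by
  obtain ⟨l₀, l₁, -, -, l₄, l₅, -⟩ := h.levels
  have n₁ : IsNbrTriple G (x 1) (x 0) (x 2) (y 1) := h.nbrs (by omega)
  have n₂ : IsNbrTriple G (x 2) (x 1) (x 3) (y 2) := h.nbrs (by omega)
  have n₃ : IsNbrTriple G (x 3) (x 2) (x 4) (y 3) := h.nbrs (by omega)
  have n₄ : IsNbrTriple G (x 4) (x 3) (x 5) (y 4) := h.nbrs (by omega)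
  have ly₂ : f (y 2) ≤ 3 := h.level_y_le (i := 1) (by omega)
  have ly₃ : 2 ≤ f (y 3) := h.le_level_y (i := 2) (by omega)
  have hcases := h.edge_cases hG (i := 1) (by omega)
  simp only [Nat.reduceAdd] at hcases
  rcases hcases with e | e | e | e | ⟨⟨z, hz₁, hz₂⟩, z', hz'₁, hz'₂⟩
  · exact absurd e (h.y₂_ne_y₃ hG)
  · exact .inl e
  · rcases n₁.eq_or_eq_or_eq e with e | e | e
    exacts [absurd (congrArg f e) (by omega), absurd e.symm n₃.ne₁₃, .inr (.inl e.symm)]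
  · rcases n₄.eq_or_eq_or_eq e.symm with e | e | e
    exacts [absurd e.symm n₂.ne₂₃, absurd (congrArg f e) (by omega), .inr (.inr (.inl e))]
  · refine .inr (.inr (.inr ⟨?_, ?_⟩))
    · rcases n₁.eq_or_eq_or_eq hz₁ with rfl | rfl | rfl
      · exact absurd (h.lip hz₂.symm) (by omega)
      · rcases n₂.eq_or_eq_or_eq hz₂ with e | e | e
        exacts [absurd (congrArg f e) (by omega), absurd e n₃.adj₃.ne',
          absurd e.symm (h.y₂_ne_y₃ hG)]
      · exact hz₂
    · rcases n₄.eq_or_eq_or_eq hz'₂.symm with rfl | rfl | rfl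
      · rcases n₃.eq_or_eq_or_eq hz'₁.symm with e | e | e
        exacts [absurd e n₂.adj₃.ne', absurd (congrArg f e) (by omega), absurd e (h.y₂_ne_y₃ hG)]
      · exact absurd (h.lip hz'₁.symm) (by omega)
      · exact hz'₁

theorem not_square_pentagon (h : IsLevelPath G f x y) (hG : IsMatchedCubic G)
    (h₂₃ : G.Adj (y 2) (y 3)) (h₂₄ : G.Adj (y 2) (y 4)) : ¬ G.Adj (y 3) (y 5) := fun h₃₅ => by
  obtain ⟨l₀, l₁, l₂, -, l₄, -⟩ := h.levels
  have n₁ : IsNbrTriple G (x 1) (x 0) (x 2) (y 1) := h.nbrs (by omega)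
  have n₂ : IsNbrTriple G (x 2) (x 1) (x 3) (y 2) := h.nbrs (by omega)
  have n₃ : IsNbrTriple G (x 3) (x 2) (x 4) (y 3) := h.nbrs (by omega)
  have ly₁ : f (y 1) ≤ 2 := h.level_y_le (i := 0) (by omega)
  have ly₃ : 3 ≤ f (y 3) := by
    have : 4 ≤ f (y 5) := h.le_level_y (i := 4) (by omega)
    have := h.lip h₃₅.symm
    omega
  have ly₄ : 3 ≤ f (y 4) := h.le_level_y (i := 3) (by omega)
  have hy₂ : IsNbrTriple G (y 2) (x 2) (y 3) (y 4) :=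
    isNbrTriple_of_adj hG.regular n₂.adj₃.symm h₂₃ h₂₄ (ne_of_apply_ne f (by omega))
      (ne_of_apply_ne f (by omega)) (h.y₃_ne_y₄ hG)
  have eq_x₂ {v : V} (hv : G.Adj v (y 2)) (hfv : f v ≤ 2) : v = x 2 := by
    rcases hy₂.eq_or_eq_or_eq hv.symm with e | rfl | rfl
    exacts [e, absurd hfv (by omega), absurd hfv (by omega)]
  have hcases := h.edge_cases hG (i := 0) (by omega)
  simp only [Nat.reduceAdd] at hcases
  rcases hcases with e | e | e | e | ⟨⟨z, hz₁, hz₂⟩, -⟩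
  · have := eq_x₂ (e ▸ n₁.adj₃) (by omega)
    exact absurd (congrArg f this) (by omega)
  · exact n₁.ne₂₃ (eq_x₂ e ly₁).symm
  · have := eq_x₂ e (by omega)
    exact n₁.ne₁₂ this
  · rcases n₃.eq_or_eq_or_eq e.symm with e | e | e
    exacts [n₁.ne₂₃ e.symm, absurd (congrArg f e) (by omega), absurd (congrArg f e) (by omega)]
  · have := h.lip hz₁.symm
    have := congrArg f (eq_x₂ hz₂ (by omega))
    omega

theorem le_dist_of_adj_x₀ (h : IsLevelPath G f x y) (hG : IsMatchedCubic G)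
    (hy₁ : IsNbrTriple G (y 1) (x 1) (y 2) (y 3)) (hy₂ : IsNbrTriple G (y 2) (x 2) (y 1) (y 4))
    {c : V} (hc : G.Adj (x 0) c) (hcx : c ≠ x 1) : 3 ≤ G.dist (x 2) c ∧ 2 ≤ G.dist (y 1) c := by
  obtain ⟨l₀, l₁, l₂, l₃, -⟩ := h.levels
  have n₁ : IsNbrTriple G (x 1) (x 0) (x 2) (y 1) := h.nbrs (by omega)
  have n₂ : IsNbrTriple G (x 2) (x 1) (x 3) (y 2) := h.nbrs (by omega)
  have ly₃ : 2 ≤ f (y 3) := h.le_level_y (i := 2) (by omega)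
  have ly₄ : 3 ≤ f (y 4) := h.le_level_y (i := 3) (by omega)
  have ly₂ := h.lip hy₂.adj₃.symm
  have lc := h.lip hc.symm
  have hcy₁ : c ≠ y 1 := by
    rintro rfl
    rcases hy₁.eq_or_eq_or_eq hc.symm with e | e | e <;> exact absurd (congrArg f e) (by omega)
  have two_le {v : V} (hvc : v ≠ c) (hadj : ¬ G.Adj v c) : 2 ≤ G.dist v c :=
    hG.connected.one_lt_dist_of_ne_of_not_adj hvc hadj
  refine ⟨succ_le_dist hG.connected (ne_of_apply_ne f (by omega)) (n₂.forall_adj ?_ ?_ ?_), ?_⟩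
  · refine two_le hcx.symm fun hadj => ?_
    rcases n₁.eq_or_eq_or_eq hadj with e | e | e
    exacts [hc.ne e.symm, absurd (congrArg f e) (by omega), hcy₁ e]
  · exact two_le (ne_of_apply_ne f (by omega)) fun hadj => absurd (h.lip hadj) (by omega)
  · refine two_le (ne_of_apply_ne f (by omega)) fun hadj => ?_
    rcases hy₂.eq_or_eq_or_eq hadj with e | e | e
    exacts [absurd (congrArg f e) (by omega), hcy₁ e, absurd (congrArg f e) (by omega)]
  · refine two_le hcy₁.symm fun hadj => ?_
    rcases hy₁.eq_or_eq_or_eq hadj with e | e | e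
    exacts [hcx e, absurd (congrArg f e) (by omega), absurd (congrArg f e) (by omega)]

theorem not_adj_y₁_y₂ (h : IsLevelPath G f x y) (hG : IsMatchedCubic G)
    (h₁₃ : G.Adj (y 1) (y 3)) (h₂₄ : G.Adj (y 2) (y 4)) : ¬ G.Adj (y 1) (y 2) := fun h₁₂ => by
  obtain ⟨-, l₁, l₂, -⟩ := h.levels
  have n₁ : IsNbrTriple G (x 1) (x 0) (x 2) (y 1) := h.nbrs (by omega)
  have n₂ : IsNbrTriple G (x 2) (x 1) (x 3) (y 2) := h.nbrs (by omega)
  have ly₁ : f (y 1) ≤ 2 := h.level_y_le (i := 0) (by omega)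
  have ly₃ : 2 ≤ f (y 3) := h.le_level_y (i := 2) (by omega)
  have ly₄ : 3 ≤ f (y 4) := h.le_level_y (i := 3) (by omega)
  have ly₂ := h.lip h₂₄.symm
  have hy₁ : IsNbrTriple G (y 1) (x 1) (y 2) (y 3) :=
    isNbrTriple_of_adj hG.regular n₁.adj₃.symm h₁₂ h₁₃ (ne_of_apply_ne f (by omega))
      (ne_of_apply_ne f (by omega)) (h.y₂_ne_y₃ hG)
  have hy₂ : IsNbrTriple G (y 2) (x 2) (y 1) (y 4) :=
    isNbrTriple_of_adj hG.regular n₂.adj₃.symm h₁₂.symm h₂₄ n₁.ne₂₃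
      (ne_of_apply_ne f (by omega)) (ne_of_apply_ne f (by omega))
  obtain ⟨c, d, hx₀⟩ := exists_isNbrTriple hG.regular n₁.adj₁.symm
  have hc := h.le_dist_of_adj_x₀ hG hy₁ hy₂ hx₀.adj₂ hx₀.ne₁₂.symm
  have hd := h.le_dist_of_adj_x₀ hG hy₁ hy₂ hx₀.adj₃ hx₀.ne₁₃.symm
  have := hG.matching n₁ hx₀
  omega

theorem level_y₂_le_of_pentagon (h : IsLevelPath G f x y) (hG : IsMatchedCubic G)
    (h₁₃ : G.Adj (y 1) (y 3)) (h₂₄ : G.Adj (y 2) (y 4)) : f (y 2) ≤ 2 := by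
  obtain ⟨l₀, -, -, -, l₄, -⟩ := h.levels
  have n₁ : IsNbrTriple G (x 1) (x 0) (x 2) (y 1) := h.nbrs (by omega)
  have n₃ : IsNbrTriple G (x 3) (x 2) (x 4) (y 3) := h.nbrs (by omega)
  have ly₁ : f (y 1) ≤ 2 := h.level_y_le (i := 0) (by omega)
  have hcases := h.edge_cases hG (i := 0) (by omega)
  simp only [Nat.reduceAdd] at hcases
  rcases hcases with e | e | e | e | ⟨⟨z, hz₁, hz₂⟩, -⟩
  · rwa [← e]
  · exact absurd e (h.not_adj_y₁_y₂ hG h₁₃ h₂₄)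
  · linarith [h.lip e.symm]
  · rcases n₃.eq_or_eq_or_eq e.symm with e | e | e
    exacts [absurd e.symm n₁.ne₂₃, absurd (congrArg f e) (by omega), absurd e h₁₃.ne]
  · linarith [h.lip hz₁.symm, h.lip hz₂.symm]

theorem not_pentagon_pentagon (h : IsLevelPath G f x y) (hG : IsMatchedCubic G)
    (h₁₃ : G.Adj (y 1) (y 3)) (h₂₄ : G.Adj (y 2) (y 4)) : ¬ G.Adj (y 3) (y 5) := fun h₃₅ => by
  have hy₂ := h.level_y₂_le_of_pentagon hG h₁₃ h₂₄
  have hy₄ := h.reverse.level_y₂_le_of_pentagon hG h₃₅.symm h₂₄.symm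
  simp only [Nat.reduceSub] at hy₄
  have := h.lip h₂₄.symm
  omega

theorem square_of_middle_edge (h : IsLevelPath G f x y) (hG : IsMatchedCubic G) :
    G.Adj (y 2) (y 3) ∨ y 1 = y 3 ∨ y 2 = y 4 := by
  rcases h.middle_edge_cases hG with e | e | e | ⟨h₁₃, h₂₄⟩
  · exact .inl e
  · exact .inr (.inl e)
  · exact .inr (.inr e)
  have hcases := h.reverse.middle_edge_cases hG
  simp only [Nat.reduceSub] at hcases
  rcases hcases with h₄₃ | e | e | ⟨h₅₃, -⟩
  · exact absurd h₁₃.symm (h.reverse.not_square_pentagon hG h₄₃ h₂₄.symm)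
  · have ly₁ : f (y 1) ≤ 2 := h.level_y_le (i := 0) (by omega)
    have ly₅ : 4 ≤ f (y 5) := h.le_level_y (i := 4) (by omega)
    have := h.lip h₁₃.symm
    rw [← e] at this
    omega
  · exact absurd e h₂₄.ne'
  · exact absurd h₅₃.symm (h.not_pentagon_pentagon hG h₁₃ h₂₄)

theorem exists_isLadder_of_slanted (h : IsLevelPath G f x y) (hG : IsMatchedCubic G)
    {a₀ a₁ b₀ b₁ b₂ : V} (fa₀ : f a₀ = 2) (fa₁ : f a₁ = 3) (fb₀ : f b₀ = 1) (fb₁ : f b₁ = 2)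
    (fb₂ : f b₂ = 3) (ha₀ : G.Adj a₀ a₁) (ha₁ : G.Adj a₁ (x 4)) (hb₀ : G.Adj b₀ b₁)
    (hb₁ : G.Adj b₁ b₂) (h₀ : G.Adj a₀ b₀) (h₁ : G.Adj a₁ b₁) (h₂ : G.Adj (x 4) b₂)
    (h₀₁ : a₀ ≠ b₁) (h₁₂ : a₁ ≠ b₂) : ∃ z, IsLadder G 4 z := by
  obtain ⟨-, -, -, -, l₄, l₅, l₆⟩ := h.levels
  have n₅ : IsNbrTriple G (x 5) (x 4) (x 6) (y 5) := h.nbrs (by omega)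
  have hnodup : [a₀, a₁, x 4, b₀, b₁, b₂].Nodup := by
    simp only [List.nodup_cons, List.mem_cons, List.not_mem_nil, not_or]
    refine ⟨⟨?_, ?_, ?_, h₀₁, ?_, not_false⟩, ⟨?_, ?_, ?_, h₁₂, not_false⟩, ⟨?_, ?_, ?_, not_false⟩,
      ⟨?_, ?_, not_false⟩, ⟨?_, not_false⟩, not_false, List.nodup_nil⟩ <;>
      exact ne_of_apply_ne f (by omega)
  have hL := isLadder_threeRungs hnodup ha₀ ha₁ hb₀ hb₁ h₀ h₁ h₂
  obtain ⟨z, hz, hzL, hzx₅⟩ := hL.exists_extension_of_level hG h.lip (s := 0) (c := 2)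
    (by intro i hi; interval_cases i <;> simp [threeRungs, *]) n₅.adj₁.symm (by simp [l₅])
    fun t ht => by
      obtain rfl : t = 1 := Fin.eq_one_of_ne_zero t ht
      exact ne_of_apply_ne f (by simp [threeRungs, *])
  have hz_level : ∀ i ≤ 3, f (z 0 i) = 2 + i := fun i hi => by
    obtain hi | rfl := hi.lt_or_eq
    · rw [hzL 0 i (by omega)]
      interval_cases i <;> simp [threeRungs, *]
    · simp [hzx₅, l₅]
  obtain ⟨z', hz', -⟩ := hz.exists_extension_of_level hG h.lip hz_level (hzx₅ ▸ n₅.adj₂)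
    (by simp [l₆]) fun t ht => by
      obtain rfl : t = 1 := Fin.eq_one_of_ne_zero t ht
      have hz₁ := h.lip (hz.adj_succ 1 (i := 2) (by omega)).symm
      rw [hzL 1 2 le_rfl] at hz₁
      simp only [threeRungs, fb₂] at hz₁
      refine ne_of_apply_ne f (ne_of_gt ?_)
      simp only [Nat.reduceAdd] at hz₁ ⊢
      omega
  exact ⟨z', hz'⟩

theorem exists_isLadder_of_y₂_eq_y₄ (h : IsLevelPath G f x y) (hG : IsMatchedCubic G)
    (h₂₄ : y 2 = y 4) : ∃ z, IsLadder G 4 z := by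
  obtain ⟨l₀, l₁, l₂, l₃, -⟩ := h.levels
  have n₁ : IsNbrTriple G (x 1) (x 0) (x 2) (y 1) := h.nbrs (by omega)
  have n₂ : IsNbrTriple G (x 2) (x 1) (x 3) (y 2) := h.nbrs (by omega)
  have n₃ : IsNbrTriple G (x 3) (x 2) (x 4) (y 3) := h.nbrs (by omega)
  have n₄ : IsNbrTriple G (x 4) (x 3) (x 5) (y 2) := h₂₄ ▸ h.nbrs (i := 3) (by omega)
  have ly₁ : f (y 1) ≤ 2 := h.level_y_le (i := 0) (by omega)
  have ly₂ : f (y 2) = 3 :=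
    le_antisymm (h.level_y_le (i := 1) (by omega)) (h₂₄ ▸ h.le_level_y (i := 3) (by omega))
  have hcases := h.edge_cases hG (i := 0) (by omega)
  simp only [Nat.reduceAdd] at hcases
  rcases hcases with e | e | e | e | ⟨⟨z, hz₁, hz₂⟩, -⟩
  · exact absurd (congrArg f e) (by omega)
  · have := h.lip e.symm
    exact h.exists_isLadder_of_slanted hG (by omega) ly₂ l₁ l₂ l₃ e n₄.adj₃.symm n₂.adj₁.symm
      n₂.adj₂ n₁.adj₃.symm n₂.adj₃.symm n₄.adj₁ n₁.ne₂₃.symm n₂.ne₂₃.symm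
  · linarith [h.lip e.symm]
  · have := h.lip e.symm
    exact h.exists_isLadder_of_slanted hG (by omega) l₃ l₁ l₂ ly₂ e n₃.adj₂ n₂.adj₁.symm
      n₂.adj₃ n₁.adj₃.symm n₃.adj₁ n₄.adj₃ n₁.ne₂₃.symm n₂.ne₂₃
  · linarith [h.lip hz₁.symm, h.lip hz₂.symm]

theorem exists_isLadder_of_y₁_eq_y₃ (h : IsLevelPath G f x y) (hG : IsMatchedCubic G)
    (h₁₃ : y 1 = y 3) (h₃₄ : G.Adj (y 3) (y 4)) : ∃ z, IsLadder G 4 z := by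
  obtain ⟨-, l₁, l₂, l₃, -⟩ := h.levels
  have n₁ : IsNbrTriple G (x 1) (x 0) (x 2) (y 3) := h₁₃ ▸ h.nbrs (i := 0) (by omega)
  have n₃ : IsNbrTriple G (x 3) (x 2) (x 4) (y 3) := h.nbrs (by omega)
  have n₄ : IsNbrTriple G (x 4) (x 3) (x 5) (y 4) := h.nbrs (by omega)
  have ly₃ : f (y 3) = 2 :=
    le_antisymm (h₁₃ ▸ h.level_y_le (i := 0) (by omega)) (h.le_level_y (i := 2) (by omega))
  have ly₄ : 3 ≤ f (y 4) := h.le_level_y (i := 3) (by omega)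
  have := h.lip h₃₄.symm
  exact h.exists_isLadder_of_slanted hG l₂ l₃ l₁ ly₃ (by omega) n₃.adj₁.symm n₃.adj₂ n₁.adj₃ h₃₄
    n₁.adj₂.symm n₃.adj₃ n₄.adj₃ n₃.ne₁₃ n₄.ne₁₃

theorem exists_isLadder_of_squares (h : IsLevelPath G f x y) (hG : IsMatchedCubic G)
    (h₂₃ : G.Adj (y 2) (y 3)) (h₃₄ : G.Adj (y 3) (y 4)) (h₂₄ : y 2 ≠ y 4) :
    ∃ z, IsLadder G 4 z := by
  obtain ⟨-, l₁, l₂, l₃, l₄, l₅, -⟩ := h.levels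
  have n₂ : IsNbrTriple G (x 2) (x 1) (x 3) (y 2) := h.nbrs (by omega)
  have n₃ : IsNbrTriple G (x 3) (x 2) (x 4) (y 3) := h.nbrs (by omega)
  have n₄ : IsNbrTriple G (x 4) (x 3) (x 5) (y 4) := h.nbrs (by omega)
  have ly₂ : f (y 2) ≤ 3 := h.level_y_le (i := 1) (by omega)
  have ly₄ : 3 ≤ f (y 4) := h.le_level_y (i := 3) (by omega)
  have hnodup : [x 2, x 3, x 4, y 2, y 3, y 4].Nodup := by
    simp [n₃.adj₁.ne', n₃.adj₂.ne, n₃.ne₁₂, n₂.adj₃.ne, n₃.ne₁₃, n₂.ne₂₃, n₃.adj₃.ne, n₄.ne₁₃,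
      n₃.ne₂₃, n₄.adj₃.ne, h₂₃.ne, h₃₄.ne, h₂₄, ne_of_apply_ne f (show f (x 2) ≠ f (y 4) by omega),
      ne_of_apply_ne f (show f (x 4) ≠ f (y 2) by omega)]
  have hL := isLadder_threeRungs hnodup n₃.adj₁.symm n₃.adj₂ h₂₃ h₃₄ n₂.adj₃ n₃.adj₃ n₄.adj₃
  obtain ⟨z, hz, hzL, hzx₅⟩ := hL.exists_extension_of_level hG h.lip (s := 0) (c := 2)
    (by intro i hi; interval_cases i <;> simp [threeRungs, *]) n₄.adj₂ (by simp [l₅])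
    fun t ht => by
      obtain rfl : t = 1 := Fin.eq_one_of_ne_zero t ht
      exact n₄.ne₂₃
  have hz_level : ∀ i ≤ 3, -f (z 0 (3 - i)) = -5 + i := fun i hi => by
    obtain rfl | hi₀ := i.eq_zero_or_pos
    · simp [hzx₅, l₅]
    · rw [hzL 0 (3 - i) (by omega)]
      interval_cases i <;> simp [threeRungs, *]
  obtain ⟨z', hz', -⟩ := hz.reverse.exists_extension_of_level hG (f := fun v => -f v) (p := x 1)
    (fun huv => by linarith [h.lip huv.symm]) hz_level
    (by simpa [hzL, threeRungs] using n₂.adj₁) (by simp [l₁]) fun t ht => by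
      obtain rfl : t = 1 := Fin.eq_one_of_ne_zero t ht
      simpa [hzL, threeRungs] using n₂.ne₁₃
  exact ⟨z', hz'⟩

theorem exists_isLadder (h : IsLevelPath G f x y) (hG : IsMatchedCubic G) :
    ∃ z, IsLadder G 4 z := by
  have hcases := h.reverse.square_of_middle_edge hG
  simp only [Nat.reduceSub] at hcases
  by_cases h₂₄ : y 2 = y 4
  · exact h.exists_isLadder_of_y₂_eq_y₄ hG h₂₄
  rcases h.square_of_middle_edge hG with h₂₃ | h₁₃ | e
  · rcases hcases with h₄₃ | h₅₃ | e
    · exact h.exists_isLadder_of_squares hG h₂₃ h₄₃.symm h₂₄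
    · exact h.reverse.exists_isLadder_of_y₁_eq_y₃ hG h₅₃ h₂₃.symm
    · exact absurd e.symm h₂₄
  · rcases hcases with h₄₃ | h₅₃ | e
    · exact h.exists_isLadder_of_y₁_eq_y₃ hG h₁₃ h₄₃.symm
    · have ly₁ : f (y 1) ≤ 2 := h.level_y_le (i := 0) (by omega)
      have ly₅ : 4 ≤ f (y 5) := h.le_level_y (i := 4) (by omega)
      exact absurd (congrArg f (h₅₃.trans h₁₃.symm)) (by omega)
    · exact absurd e.symm h₂₄
  · exact absurd e h₂₄

end IsLevelPath

theorem exists_isLevelPath_of_six_le_dist {G : SimpleGraph V} [G.LocallyFinite]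
    (hconn : G.Connected) (hreg : G.IsRegularOfDegree 3) {u v : V} (huv : 6 ≤ G.dist u v) :
    ∃ x y, IsLevelPath G (fun w => (G.dist w u : ℤ)) x y := by
  obtain ⟨p, hp⟩ := hconn.exists_walk_length_eq_dist u v
  have hdist : ∀ i ≤ 6, G.dist (p.getVert i) u = i := fun i hi => by
    rw [SimpleGraph.dist_comm]
    have h₁ := dist_le (p.take i)
    have h₂ := dist_le (p.drop i)
    have h₃ := hconn.dist_triangle (u := u) (v := p.getVert i) (w := v)
    rw [Walk.take_length] at h₁
    rw [Walk.drop_length] at h₂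
    omega
  have hadj (i : ℕ) (hi : i < 6) : G.Adj (p.getVert i) (p.getVert (i + 1)) :=
    p.adj_getVert_succ (by omega)
  have hnbrs (i : Fin 5) : ∃ w,
      IsNbrTriple G (p.getVert (i + 1)) (p.getVert i) (p.getVert (i + 2)) w :=
    exists_isNbrTriple_of_ne hreg (hadj i (by omega)).symm (hadj (i + 1) (by omega)) <|
      ne_of_apply_ne (G.dist · u) (by
        rw [hdist _ (by omega), hdist _ (by omega)]
        omega)
  choose w hw using hnbrs
  exact ⟨p.getVert, fun i => w (Fin.ofNat 5 (i - 1)), {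
    lip := fun {a b} hab => by exact_mod_cast dist_le_succ_of_adj hconn hab u
    level := fun hi => by exact_mod_cast hdist _ hi
    nbrs := fun {i} hi => by simpa [Nat.mod_eq_of_lt hi] using hw (Fin.ofNat 5 i) }⟩

theorem nonempty_iso_of_injective {W : Type*} {G : SimpleGraph V} {H : SimpleGraph W}
    [G.LocallyFinite] [H.LocallyFinite] [Nonempty W] (hconn : G.Connected) (φ : H →g G)
    (hφ : Function.Injective φ) (hdeg : ∀ w, G.degree (φ w) ≤ H.degree w) :
    Nonempty (G ≃g H) := by
  classical
  have hnbrs (w : W) : (H.neighborFinset w).image φ = G.neighborFinset (φ w) := by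
    refine Finset.eq_of_subset_of_card_le (Finset.image_subset_iff.2 fun w' hw' => ?_) ?_
    · simpa using φ.map_adj ((H.mem_neighborFinset w w').1 hw')
    · simpa [Finset.card_image_of_injective _ hφ] using hdeg w
  have exists_of_adj {w : W} {v : V} (hv : G.Adj (φ w) v) : ∃ w', H.Adj w w' ∧ φ w' = v := by
    have hv' : v ∈ (H.neighborFinset w).image φ := by
      simpa only [hnbrs, mem_neighborFinset] using hv
    simpa only [Finset.mem_image, mem_neighborFinset] using hv'
  have hsurj : Function.Surjective φ := fun v => by
    by_contra hv
    obtain ⟨p⟩ := hconn.preconnected (φ (Classical.arbitrary W)) v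
    obtain ⟨d, -, ⟨w, hw⟩, hd⟩ := p.exists_boundary_dart (Set.range φ) ⟨_, rfl⟩ hv
    obtain ⟨w', -, hw'⟩ := exists_of_adj (hw ▸ d.adj)
    exact hd ⟨w', hw'⟩
  refine ⟨RelIso.symm ⟨Equiv.ofBijective φ ⟨hφ, hsurj⟩, fun {a b} => ⟨fun hab => ?_, φ.map_adj⟩⟩⟩
  obtain ⟨w', haw', hw'⟩ := exists_of_adj hab
  rwa [← hφ hw']

theorem isRegularOfDegree_prismGraph (m : ℕ) [hfin : (prismGraph (m + 3)).LocallyFinite] :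
    (prismGraph (m + 3)).IsRegularOfDegree 3 := fun w => by
  have hsum : (prismGraph (m + 3)).degree w =
      (cycleGraph (m + 3)).degree w.1 + (⊤ : SimpleGraph (Fin 2)).degree w.2 :=
    @degree_boxProd _ _ _ _ w _ _ (hfin w)
  rw [hsum, cycleGraph_degree_three_le, complete_graph_degree, Fintype.card_fin]

theorem three_le_degree_mobiusLadder {n : ℕ} [(mobiusLadder n).LocallyFinite] (hn : 2 ≤ n)
    (i : ZMod (2 * n)) : 3 ≤ (mobiusLadder n).degree i := by
  have add_inj {a b : ℕ} (ha : a < 2 * n) (hb : b < 2 * n)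
      (e : i + (a : ZMod (2 * n)) = i + b) : a = b := by
    have := (ZMod.natCast_eq_natCast_iff' a b (2 * n)).1 (add_left_cancel e)
    rwa [Nat.mod_eq_of_lt ha, Nat.mod_eq_of_lt hb] at this
  have ne_add {a : ℕ} (ha₀ : a ≠ 0) (ha : a < 2 * n) : i ≠ i + (a : ZMod (2 * n)) := fun e =>
    ha₀ (add_inj (a := 0) (by omega) ha (by simpa using e)).symm
  have hback : i + ((2 * n - 1 : ℕ) : ZMod (2 * n)) + 1 = i := by
    rw [add_assoc, ← Nat.cast_add_one, Nat.sub_add_cancel (by omega), ZMod.natCast_self, add_zero]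
  have hcard : ({1, n, 2 * n - 1} : Finset ℕ).card = 3 :=
    Finset.card_eq_three.2 ⟨1, n, 2 * n - 1, by omega, by omega, by omega, rfl⟩
  rw [← hcard]
  refine Finset.card_le_card_of_injOn (fun a : ℕ => i + (a : ZMod (2 * n))) (fun a ha => ?_)
    fun a ha b hb => ?_
  · rw [Finset.mem_coe, mem_neighborFinset, mobiusLadder, fromRel_adj]
    simp only [Finset.mem_coe, Finset.mem_insert, Finset.mem_singleton] at ha
    refine ⟨ne_add (by omega) (by omega), ?_⟩
    rcases ha with rfl | rfl | rfl
    exacts [.inl (.inl (by simp)), .inl (.inr rfl), .inr (.inl hback.symm)]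
  · simp only [Finset.mem_coe, Finset.mem_insert, Finset.mem_singleton] at ha hb
    exact add_inj (by omega) (by omega)

theorem adj_of_cycleGraph_adj {G : SimpleGraph V} {k : ℕ} {w : ℕ → V}
    (hw : ∀ i < k, G.Adj (w i) (w (i + 1))) (hclose : G.Adj (w k) (w 0)) {i j : Fin (k + 1)}
    (hij : (cycleGraph (k + 1)).Adj i j) : G.Adj (w i) (w j) := by
  have adj_succ (i : Fin (k + 1)) : G.Adj (w i) (w (i + 1 : Fin (k + 1))) := by
    rw [Fin.val_add_one]
    split_ifs with hi
    · simpa [hi] using hclose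
    · exact hw i (Fin.val_lt_last hi)
  obtain _ | k := k
  · exact absurd (show i = j by omega) hij.ne
  rcases cycleGraph_adj.1 hij with e | e
  · rw [sub_eq_iff_eq_add'.1 e]
    exact (adj_succ j).symm
  · rw [sub_eq_iff_eq_add'.1 e]
    exact adj_succ i

/-- The Hamiltonian cycle of a Möbius ladder with rows `z 0` and `z 1` of length `k + 1`: it runs
along the first row and then along the second one. Only the indices below `2 * (k + 1)` are
relevant. -/
def mobiusCycle (k : ℕ) (z : Fin 2 → ℕ → V) (i : ℕ) : V :=
  if i ≤ k then z 0 i else z 1 (i - (k + 1))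

namespace IsLadder

variable {G : SimpleGraph V} {k : ℕ} {z : Fin 2 → ℕ → V}

theorem mobiusCycle_adj_succ (h : IsLadder G k z) (hclose : ∀ s, G.Adj (z s k) (z (s + 1) 0))
    {i : ℕ} (hi : i < 2 * (k + 1)) :
    G.Adj (mobiusCycle k z i) (mobiusCycle k z ((i + 1) % (2 * (k + 1)))) := by
  simp only [mobiusCycle]
  rcases lt_trichotomy i k with hik | rfl | hik
  · rw [Nat.mod_eq_of_lt (by omega), if_pos hik.le, if_pos (by omega)]
    exact h.adj_succ 0 hik
  · rw [Nat.mod_eq_of_lt (by omega), if_pos le_rfl, if_neg (by omega), Nat.sub_self]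
    exact hclose 0
  · rw [if_neg hik.not_ge]
    obtain ⟨j, rfl⟩ := Nat.exists_eq_add_of_le' hik
    rw [Nat.succ_eq_add_one, Nat.add_sub_cancel]
    obtain rfl | hj := eq_or_ne j k
    · rw [show j + (j + 1) + 1 = 2 * (j + 1) by ring, Nat.mod_self, if_pos j.zero_le]
      exact hclose 1
    · rw [Nat.mod_eq_of_lt (by omega), if_neg (by omega), add_right_comm, Nat.add_sub_cancel]
      exact h.adj_succ 1 (by omega)

theorem mobiusCycle_adj_add (h : IsLadder G k z) {i : ℕ} (hi : i < 2 * (k + 1)) :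
    G.Adj (mobiusCycle k z i) (mobiusCycle k z ((i + (k + 1)) % (2 * (k + 1)))) := by
  simp only [mobiusCycle]
  rcases le_or_gt i k with hik | hik
  · rw [Nat.mod_eq_of_lt (by omega), if_pos hik, if_neg (by omega), Nat.add_sub_cancel]
    exact h.adj_rung zero_ne_one hik
  · obtain ⟨j, rfl⟩ := Nat.exists_eq_add_of_le' hik
    rw [show j + k.succ + (k + 1) = j + 2 * (k + 1) by rw [Nat.succ_eq_add_one]; ring,
      Nat.add_mod_right, Nat.mod_eq_of_lt (by omega), if_neg (by omega), if_pos (by omega),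
      Nat.succ_eq_add_one, Nat.add_sub_cancel]
    exact h.adj_rung one_ne_zero (by omega)

theorem mobiusCycle_injOn (h : IsLadder G k z) :
    Set.InjOn (mobiusCycle k z) (Set.Iio (2 * (k + 1))) := fun i hi j hj e => by
  rw [Set.mem_Iio] at hi hj
  simp only [mobiusCycle] at e
  split_ifs at e with hik hjk hjk
  · exact (h.inj hik hjk e).2
  · exact absurd (h.inj hik (by omega) e).1 zero_ne_one
  · exact absurd (h.inj (by omega) hjk e).1 one_ne_zero
  · have := (h.inj (by omega) (by omega) e).2
    omega

variable [G.LocallyFinite]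

theorem nonempty_iso_prismGraph (h : IsLadder G k z) (hconn : G.Connected)
    (hreg : G.IsRegularOfDegree 3) (hk : 2 ≤ k) (hclose : ∀ s, G.Adj (z s k) (z s 0)) :
    Nonempty (G ≃g prismGraph (k + 1)) := by
  classical
  let φ : prismGraph (k + 1) →g G :=
    { toFun := fun w => z w.2 w.1
      map_rel' := by
        rintro ⟨i, s⟩ ⟨j, t⟩ hadj
        rcases boxProd_adj.1 hadj with ⟨hij, rfl⟩ | ⟨hst, rfl⟩
        · exact adj_of_cycleGraph_adj (w := z s) (fun _ hi => h.adj_succ s hi) (hclose s) hij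
        · exact h.adj_rung hst.ne (by omega) }
  have hφ : Function.Injective φ := by
    rintro ⟨i, s⟩ ⟨j, t⟩ e
    obtain ⟨rfl, hij⟩ := h.inj (by omega) (by omega) e
    exact Prod.ext (Fin.ext hij) rfl
  obtain ⟨m, rfl⟩ := Nat.exists_eq_add_of_le' hk
  exact nonempty_iso_of_injective hconn φ hφ fun w => by
    rw [hreg.degree_eq, (isRegularOfDegree_prismGraph m).degree_eq]

theorem nonempty_iso_mobiusLadder (h : IsLadder G k z) (hconn : G.Connected)
    (hreg : G.IsRegularOfDegree 3) (hk : 1 ≤ k) (hclose : ∀ s, G.Adj (z s k) (z (s + 1) 0)) :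
    Nonempty (G ≃g mobiusLadder (k + 1)) := by
  classical
  have adj_of_rel {i j : ZMod (2 * (k + 1))} (hij : j = i + 1 ∨ j = i + (k + 1 : ℕ)) :
      G.Adj (mobiusCycle k z i.val) (mobiusCycle k z j.val) := by
    rcases hij with rfl | rfl
    · rw [ZMod.val_add, ZMod.val_one'' (by omega)]
      exact h.mobiusCycle_adj_succ hclose i.val_lt
    · rw [ZMod.val_add, ZMod.val_natCast_of_lt (by omega)]
      exact h.mobiusCycle_adj_add i.val_lt
  let φ : mobiusLadder (k + 1) →g G :=
    { toFun := fun i => mobiusCycle k z i.val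
      map_rel' := fun {i j} hadj => by
        rcases hadj.2 with e | e
        exacts [adj_of_rel e, (adj_of_rel e).symm] }
  have hφ : Function.Injective φ := fun i j e =>
    ZMod.val_injective _ (h.mobiusCycle_injOn i.val_lt j.val_lt e)
  exact nonempty_iso_of_injective hconn φ hφ fun i => by
    rw [hreg.degree_eq]
    exact three_le_degree_mobiusLadder (by omega) i

end IsLadder

/-- A finite, connected, 3-regular simple graph with nonnegative Ricci
curvature and diameter at least 6 is isomorphic to a prism graph or a Möbius ladder. -/
theorem cubic_classification_finite (G : SimpleGraph V) [Fintype V] [G.LocallyFinite]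
    (hconn : G.Connected) (hreg : ∀ v : V, G.degree v = 3) (hric : NonnegRicci G)
    (hdiam : ∃ u v : V, 6 ≤ G.dist u v) :
    (∃ n : ℕ, 3 ≤ n ∧ Nonempty (G ≃g prismGraph n)) ∨
      (∃ n : ℕ, Nonempty (G ≃g mobiusLadder n)) := by
  have hG : IsMatchedCubic G := hric.isMatchedCubic hconn hreg
  obtain ⟨u, v, huv⟩ := hdiam
  obtain ⟨x, y, hpath⟩ := exists_isLevelPath_of_six_le_dist hconn hreg huv
  obtain ⟨z₀, h₀⟩ := hpath.exists_isLadder hG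
  obtain ⟨k, z, hk, h, hmax⟩ := h₀.exists_maximal
  obtain ⟨τ, hclose⟩ := h.exists_closed_of_maximal hG hk hmax
  obtain rfl | rfl : τ = 0 ∨ τ = 1 := by omega
  · simp only [add_zero] at hclose
    exact .inl ⟨k + 1, by omega, h.nonempty_iso_prismGraph hconn hreg (by omega) hclose⟩
  · exact .inr ⟨k + 1, h.nonempty_iso_mobiusLadder hconn hreg (by omega) hclose⟩
end
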